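/- arXiv:1407.6077 — 4 statements merged into one kernel-verified Lean document; each statement's English description precedes it below -/
import Mathlib

section
/- Let A be an l×n real matrix and for a tuple c = (c_1,…,c_l) ∈ {1,…,n}^l let Δ_c(A) denote the determinant of the l×l matrix whose t-th column is column c_t of A. Then for all tuples p = (p_1,…,p_l), q = (q_1,…,q_l) ∈ {1,…,n}^l and every 1 ≤ m ≤ l, the Plücker relation holds: Δ_p(A) · Δ_q(A) = Σ_{1 ≤ i_1 < … < i_m ≤ l} Δ_{p′}(A) · Δ_{q′}(A), where p′ is the tuple p with the entries in positions i_1,…,i_m replaced, in order, by q_{l−m+1},…,q_l, and q′ := (q_1,…,q_{l−m}, p_{i_1},…,p_{i_m}). -/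
/-- `Δ_c(A)`: the determinant of the `l × l` matrix whose `t`-th column is column `c t`
of `A`. -/
noncomputable def deltaCol {l n : ℕ} (A : Matrix (Fin l) (Fin n) ℝ) (c : Fin l → Fin n) : ℝ :=
  (A.submatrix id c).det

/-- The tuple `p` with the entries in the positions of `S` (listed increasingly) replaced,
in order, by `q_{l-m+1}, …, q_l` (0-indexed: `q (l-m), …, q (l-1)`). -/
def pluckerP {l n : ℕ} (m : ℕ) (hml : m ≤ l) (p q : Fin l → Fin n)
    (S : {S : Finset (Fin l) // S.card = m}) : Fin l → Fin n := fun t =>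
  if h : t ∈ S.1 then
    q ⟨l - m + ((S.1.orderIsoOfFin S.2).symm ⟨t, h⟩).val, by
      have := ((S.1.orderIsoOfFin S.2).symm ⟨t, h⟩).isLt; omega⟩
  else p t

/-- The tuple `(q_1, …, q_{l-m}, p_{i_1}, …, p_{i_m})` where `i_1 < … < i_m` are the
elements of `S`. -/
def pluckerQ {l n : ℕ} (m : ℕ) (hml : m ≤ l) (p q : Fin l → Fin n)
    (S : {S : Finset (Fin l) // S.card = m}) : Fin l → Fin n := fun t =>
  if h : t.val < l - m then q t
  else p (S.1.orderIsoOfFin S.2 ⟨t.val - (l - m), by have := t.isLt; omega⟩)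

lemma aux_sum_apply {m l : ℕ} {ι : Type*} (s : Finset ι)
    (F : ι → (Fin l → ℝ) [⋀^Fin m]→ₗ[ℝ] ℝ) (w : Fin m → Fin l → ℝ) :
    (∑ i ∈ s, F i) w = ∑ i ∈ s, F i w := by
  classical
  induction s using Finset.induction_on with
  | empty => simp
  | insert a s ha ih => rw [Finset.sum_insert ha, Finset.sum_insert ha, AlternatingMap.add_apply, ih]

open Function in
lemma aux_extend_update {m l : ℕ} {E : Type*} (h : Fin m ↪ Fin l) (M : Fin l → E) (w : Fin m → E)
    (j : Fin m) (x : E) [DecidableEq (Fin m)] :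
    extend h (update w j x) M = update (extend h w M) (h j) x := by
  funext t
  by_cases ht : ∃ i, h i = t
  · obtain ⟨i, rfl⟩ := ht
    rw [h.injective.extend_apply]
    by_cases hij : i = j
    · subst hij; simp
    · rw [update_of_ne hij, update_of_ne (fun e => hij (h.injective e)), h.injective.extend_apply]
  · rw [extend_apply' _ _ _ ht, update_of_ne (fun e => ht ⟨j, e.symm⟩), extend_apply' _ _ _ ht]

open Function in
noncomputable def auxAlt {m l : ℕ} (h : Fin m ↪ Fin l) (M : Fin l → Fin l → ℝ) :
    (Fin l → ℝ) [⋀^Fin m]→ₗ[ℝ] ℝ where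
  toFun w := Matrix.detRowAlternating (R := ℝ) (extend h w M)
  map_update_add' w j x y := by
    rw [aux_extend_update, aux_extend_update, aux_extend_update, AlternatingMap.map_update_add]
  map_update_smul' w j c x := by
    rw [aux_extend_update, aux_extend_update, AlternatingMap.map_update_smul]
  map_eq_zero_of_eq' w i j hw hij := by
    refine AlternatingMap.map_eq_zero_of_eq _ _ (i := h i) (j := h j) ?_
      (fun e => hij (h.injective e))
    rw [h.injective.extend_apply, h.injective.extend_apply, hw]

lemma auxAlt_apply {m l : ℕ} (h : Fin m ↪ Fin l) (M : Fin l → Fin l → ℝ) (w) :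
    auxAlt h M w = Matrix.det (Matrix.of (Function.extend h w M)) := rfl

abbrev auxO {l m : ℕ} (S : {S : Finset (Fin l) // S.card = m}) : Fin m ↪ Fin l :=
  (S.1.orderEmbOfFin S.2).toEmbedding

lemma aux_one {l m : ℕ} (g : Fin m ↪ Fin l) (V : Fin l → Fin l → ℝ) (w : Fin m → Fin l → ℝ) :
    auxAlt g V w = ∑ S : {S : Finset (Fin l) // S.card = m},
      auxAlt (auxO S) (fun i => Pi.basisFun ℝ (Fin l) i) w *
        auxAlt g V (fun j => Pi.basisFun ℝ (Fin l) (auxO S j)) := by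
  classical
  have key : auxAlt g V = ∑ S : {S : Finset (Fin l) // S.card = m},
      auxAlt g V (fun j => Pi.basisFun ℝ (Fin l) (auxO S j)) •
      auxAlt (auxO S) (fun i => Pi.basisFun ℝ (Fin l) i) := by
    refine (Pi.basisFun ℝ (Fin l)).ext_alternating fun f hf => ?_
    rw [aux_sum_apply]
    have hcard : (Finset.univ.image f).card = m := by
      rw [Finset.card_image_of_injective _ hf]; simp
    rw [Finset.sum_eq_single (⟨Finset.univ.image f, hcard⟩ : {S : Finset (Fin l) // S.card = m})]
    · set S : {S : Finset (Fin l) // S.card = m} := ⟨Finset.univ.image f, hcard⟩ with hS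
      have hex : ∀ j, ∃ i, auxO S i = f j := by
        intro j
        have : f j ∈ Set.range (S.1.orderEmbOfFin S.2) := by
          rw [Finset.range_orderEmbOfFin]; simp [hS]
        exact this
      choose s hs using hex
      have sinj : Function.Injective s := fun a b hab => hf (by rw [← hs, ← hs, hab])
      let σ : Equiv.Perm (Fin m) := Equiv.ofBijective s (Finite.injective_iff_bijective.1 sinj)
      have e : (fun i => Pi.basisFun ℝ (Fin l) (f i)) =
          (fun j => Pi.basisFun ℝ (Fin l) (auxO S j)) ∘ σ := by
        funext i; simp only [Function.comp, σ, Equiv.ofBijective_apply, hs]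
      rw [e, AlternatingMap.smul_apply, AlternatingMap.map_perm, AlternatingMap.map_perm]
      have h1 : auxAlt (auxO S) (fun i => Pi.basisFun ℝ (Fin l) i)
          (fun j => Pi.basisFun ℝ (Fin l) (auxO S j)) = 1 := by
        rw [auxAlt_apply]
        convert Matrix.det_one (R := ℝ) (n := Fin l) using 2
        have : Function.extend (auxO S) (fun j => Pi.basisFun ℝ (Fin l) (auxO S j))
            (fun i => Pi.basisFun ℝ (Fin l) i) = fun i => Pi.basisFun ℝ (Fin l) i := by
          funext t
          by_cases ht : ∃ i, auxO S i = t
          · obtain ⟨i, rfl⟩ := ht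
            rw [(auxO S).injective.extend_apply]
          · rw [Function.extend_apply' _ _ _ ht]
        rw [this]
        ext i j
        simp [Matrix.one_apply, Pi.single_apply, eq_comm]
      rw [h1]
      simp [Units.smul_def, mul_comm]
    · intro S _ hne
      have : ∃ j, f j ∉ S.1 := by
        by_contra! hc
        apply hne
        apply Subtype.ext
        symm
        apply Finset.eq_of_subset_of_card_le
        · intro x hx
          obtain ⟨j, _, rfl⟩ := Finset.mem_image.1 hx
          exact hc j
        · rw [S.2]; exact hcard.ge
      obtain ⟨j, hj⟩ := this
      rw [AlternatingMap.smul_apply, auxAlt_apply (auxO S)]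
      have hj' : ¬ ∃ i, auxO S i = f j := by
        rintro ⟨i, hi⟩
        exact hj (hi ▸ Finset.orderEmbOfFin_mem S.1 S.2 i)
      rw [Matrix.det_zero_of_row_eq (i := auxO S j) (j := f j) (fun h => hj' ⟨j, h⟩), smul_zero]
      change Function.extend (auxO S) (fun i => Pi.basisFun ℝ (Fin l) (f i))
          (fun i => Pi.basisFun ℝ (Fin l) i) (auxO S j) =
        Function.extend (auxO S) (fun i => Pi.basisFun ℝ (Fin l) (f i))
          (fun i => Pi.basisFun ℝ (Fin l) i) (f j)
      rw [(auxO S).injective.extend_apply,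
        Function.extend_apply' _ _ _ hj']
    · simp
  conv_lhs => rw [key]
  rw [aux_sum_apply]
  simp [mul_comm]

lemma aux_mul {l m : ℕ} (h : Fin m ↪ Fin l) (w : Fin m → Fin l → ℝ) (M : Fin l → Fin l → ℝ)
    (P : Matrix (Fin l) (Fin l) ℝ) :
    auxAlt h (fun i => Matrix.vecMul (M i) P) (fun i => Matrix.vecMul (w i) P) =
      auxAlt h M w * P.det := by
  rw [auxAlt_apply, auxAlt_apply, ← Matrix.det_mul]
  congr 1
  ext i j
  change Function.extend h (fun i => Matrix.vecMul (w i) P) (fun i => Matrix.vecMul (M i) P) i j =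
    Matrix.vecMul (Function.extend h w M i) P j
  by_cases ht : ∃ t, h t = i
  · obtain ⟨i, rfl⟩ := ht
    rw [h.injective.extend_apply, h.injective.extend_apply]
  · rw [Function.extend_apply' _ _ _ ht, Function.extend_apply' _ _ _ ht]

lemma aux_self {l m : ℕ} (h : Fin m ↪ Fin l) (M : Fin l → Fin l → ℝ) :
    auxAlt h M (fun i => M (h i)) = (Matrix.of M).det := by
  rw [auxAlt_apply]
  congr 2
  funext t
  by_cases ht : ∃ i, h i = t
  · obtain ⟨i, rfl⟩ := ht
    rw [h.injective.extend_apply]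
  · rw [Function.extend_apply' _ _ _ ht]

lemma aux_inv {l m : ℕ} (g : Fin m ↪ Fin l) (P Q : Matrix (Fin l) (Fin l) ℝ) (hP : P.det ≠ 0) :
    P.det * Q.det = ∑ S : {S : Finset (Fin l) // S.card = m},
      auxAlt (auxO S) P (fun j => Q (g j)) * auxAlt g Q (fun j => P (auxO S j)) := by
  obtain ⟨V, rfl⟩ : ∃ V : Matrix (Fin l) (Fin l) ℝ, Q = V * P :=
    ⟨Q * P⁻¹, by rw [Matrix.mul_assoc, Matrix.nonsing_inv_mul _ (isUnit_iff_ne_zero.2 hP),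
      Matrix.mul_one]⟩
  have e1 : ∀ i, (V * P) i = Matrix.vecMul (V i) P := fun i => by
    rw [Matrix.mul_apply_eq_vecMul]
  have e2 : ∀ i, P i = Matrix.vecMul (Pi.basisFun ℝ (Fin l) i) P := fun i => by
    rw [Pi.basisFun_apply, Matrix.single_one_vecMul]; rfl
  have h := aux_one g V (fun i => V (g i))
  have h' : V.det = _ := (aux_self g V).symm.trans h
  rw [Matrix.det_mul, h', Finset.sum_mul, Finset.mul_sum]
  refine Finset.sum_congr rfl fun S _ => ?_
  have e3 : auxAlt (auxO S) P (fun j => (V * P) (g j)) =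
      auxAlt (auxO S) (fun i => Pi.basisFun ℝ (Fin l) i) (fun i => V (g i)) * P.det := by
    rw [← aux_mul]
    congr 2
    exact funext e2
  have e4 : auxAlt g (V * P) (fun j => P (auxO S j)) =
      auxAlt g V (fun j => Pi.basisFun ℝ (Fin l) (auxO S j)) * P.det := by
    refine Eq.trans ?_ (aux_mul g _ V P)
    congr 1
    funext j
    exact e2 _
  rw [e3, e4]; ring

lemma aux_cont {l m : ℕ} (h : Fin m ↪ Fin l) (M : ℝ → Fin l → Fin l → ℝ)
    (w : ℝ → Fin m → Fin l → ℝ) (hM : ∀ i, Continuous fun t => M t i)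
    (hw : ∀ i, Continuous fun t => w t i) : Continuous fun t => auxAlt h (M t) (w t) := by
  have : Continuous fun t => Function.extend h (w t) (M t) := by
    refine continuous_pi fun i => ?_
    by_cases ht : ∃ t, h t = i
    · obtain ⟨i, rfl⟩ := ht
      simp only [h.injective.extend_apply]
      exact hw i
    · simp only [Function.extend_apply' _ _ _ ht]
      exact hM i
  exact Continuous.matrix_det (A := fun t => Matrix.of (Function.extend h (w t) (M t))) this

lemma aux_gen {l m : ℕ} (g : Fin m ↪ Fin l) (P Q : Matrix (Fin l) (Fin l) ℝ) :
    P.det * Q.det = ∑ S : {S : Finset (Fin l) // S.card = m},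
      auxAlt (auxO S) P (fun j => Q (g j)) * auxAlt g Q (fun j => P (auxO S j)) := by
  have hd : Dense {t : ℝ | (Matrix.scalar (Fin l) t - (-P)).det ≠ 0} := by
    have hfin : Set.Finite {t : ℝ | (Matrix.scalar (Fin l) t - (-P)).det = 0} := by
      refine (Polynomial.finite_setOfPred_isRoot (Matrix.charpoly_monic (-P)).ne_zero).subset ?_
      intro t ht
      simpa [Polynomial.IsRoot, Matrix.eval_charpoly] using ht
    exact hfin.countable.dense_compl ℝ
  have hc : Continuous fun t : ℝ => Matrix.scalar (Fin l) t - (-P) := by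
    refine Continuous.sub ?_ continuous_const
    refine continuous_matrix fun i j => ?_
    simp only [Matrix.scalar_apply, Matrix.diagonal_apply]
    split_ifs <;> fun_prop
  have hr : ∀ i, Continuous fun t : ℝ => (Matrix.scalar (Fin l) t - (-P)) i := fun i =>
    (continuous_apply i).comp hc
  have key := Continuous.ext_on (f := fun t : ℝ => (Matrix.scalar (Fin l) t - (-P)).det * Q.det)
    (g := fun t : ℝ => ∑ S : {S : Finset (Fin l) // S.card = m},
      auxAlt (auxO S) (Matrix.scalar (Fin l) t - (-P)) (fun j => Q (g j)) *
        auxAlt g Q (fun j => (Matrix.scalar (Fin l) t - (-P)) (auxO S j))) hd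
    (hc.matrix_det.mul continuous_const) ?_ (fun t ht => aux_inv g _ Q ht)
  · have := congrFun key 0
    simpa using this
  · refine continuous_finsetSum _ fun S _ => Continuous.mul ?_ ?_
    · exact aux_cont _ (fun t => (Matrix.scalar (Fin l) t - (-P))) _ hr (fun _ => continuous_const)
    · exact aux_cont _ (fun _ => Q) (fun t j => (Matrix.scalar (Fin l) t - (-P)) (auxO S j))
        (fun _ => continuous_const) (fun _ => hr _)

lemma aux_fun {l m : ℕ} (g : Fin m ↪ Fin l) (P Q : Fin l → Fin l → ℝ) :
    (Matrix.of P).det * (Matrix.of Q).det = ∑ S : {S : Finset (Fin l) // S.card = m},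
      auxAlt (auxO S) P (fun j => Q (g j)) * auxAlt g Q (fun j => P (auxO S j)) :=
  aux_gen g (Matrix.of P) (Matrix.of Q)

/-- the Plücker relations
`Δ_p(A) · Δ_q(A) = Σ_{i_1 < … < i_m} Δ_{p′}(A) · Δ_{q′}(A)`. -/
theorem stmt_6 (l n m : ℕ) (hm : 1 ≤ m) (hml : m ≤ l) (hln : l ≤ n)
    (A : Matrix (Fin l) (Fin n) ℝ) (p q : Fin l → Fin n) :
    deltaCol A p * deltaCol A q =
      ∑ S : {S : Finset (Fin l) // S.card = m},
        deltaCol A (pluckerP m hml p q S) * deltaCol A (pluckerQ m hml p q S) := by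
  have hdet : ∀ c, deltaCol A c = Matrix.det (Matrix.of fun i t => A t (c i)) := fun c => by
    rw [deltaCol, ← Matrix.det_transpose]; rfl
  let g : Fin m ↪ Fin l := ⟨fun j => ⟨l - m + j.val, by have := j.isLt; omega⟩, fun a b h => by
    simp only [Fin.mk.injEq] at h; exact Fin.ext (by omega)⟩
  have hg : ∀ j, (g j).val = l - m + j.val := fun j => rfl
  rw [hdet, hdet, aux_fun g]
  refine Finset.sum_congr rfl fun S _ => ?_
  rw [hdet, hdet, auxAlt_apply, auxAlt_apply]
  congr 3
  · funext i
    by_cases hi : i ∈ S.1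
    · obtain ⟨j, hj⟩ : ∃ j, auxO S j = i := by
        have : i ∈ Set.range (S.1.orderEmbOfFin S.2) := by
          rw [Finset.range_orderEmbOfFin]; exact hi
        exact this
      have hs : (S.1.orderIsoOfFin S.2).symm ⟨i, hi⟩ = j := by
        rw [OrderIso.symm_apply_eq]
        exact Subtype.ext hj.symm
      conv_lhs => rw [← hj]
      rw [(auxO S).injective.extend_apply]
      funext t
      simp only [pluckerP, dif_pos hi, hs]
      rfl
    · rw [Function.extend_apply']
      · funext t
        simp only [pluckerP, dif_neg hi]
      · rintro ⟨j, rfl⟩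
        exact hi (Finset.orderEmbOfFin_mem S.1 S.2 j)
  · funext i
    by_cases hi : i.val < l - m
    · rw [Function.extend_apply']
      · funext t
        simp only [pluckerQ, dif_pos hi]
      · rintro ⟨j, rfl⟩
        rw [hg] at hi; omega
    · obtain ⟨j, rfl⟩ : ∃ j, g j = i :=
        ⟨⟨i.val - (l - m), by have := i.isLt; omega⟩, Fin.ext (by rw [hg]; dsimp only; omega)⟩
      rw [g.injective.extend_apply]
      funext t
      have hj : (⟨(g j).val - (l - m), by have := (g j).isLt; omega⟩ : Fin m) = j :=
        Fin.ext (by simp only [hg]; omega)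
      simp only [pluckerQ, dif_neg hi, hj]
      rfl
end

section
/- For every k ≥ 2 there exists a totally nonnegative (2k−1)×(2k−1) real matrix M with the following property: for all subsets U, W ⊆ {1,…,2k−1} with |U| = |W| = r ≥ 1, the minor det M[U|W] equals 0 if and only if r ≥ k+1, or r = k and W ⊆ {2,…,2k−2} (equivalently r = k and 1 ∉ W and 2k−1 ∉ W); all other minors of M are strictly positive. -/
/-- The minor of the (1-indexed) matrix `M` with rows `U` and columns `W`, both taken in
increasing order.  When `U` and `W` have different cardinalities we set it to `0`
(this case is never used); for `U = W = ∅` it is `1` (the empty determinant). -/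
noncomputable def minorN (M : ℕ → ℕ → ℝ) (U W : Finset ℕ) : ℝ :=
  if h : U.card = W.card then
    Matrix.det (Matrix.of fun i j : Fin U.card =>
      M (U.orderIsoOfFin rfl i).val (W.orderIsoOfFin h.symm j).val)
  else 0

open Finset in
lemma aux_cb {r m : ℕ} (a : Fin r → Fin m → ℝ) (b : Fin m → Fin r → ℝ) :
    Matrix.det (Matrix.of fun i j : Fin r => ∑ s, a i s * b s j) =
      ∑ e : Fin r ↪o Fin m, Matrix.det (Matrix.of fun i j => a i (e j)) *
        Matrix.det (Matrix.of fun i j => b (e i) j) := by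
  have h1 : Matrix.det (Matrix.of fun i j : Fin r => ∑ s, a i s * b s j) =
      ∑ f : Fin r → Fin m, Matrix.det (Matrix.of fun i j => a i (f j)) * ∏ i, b (f i) i := by
    simp only [Matrix.det_apply', Matrix.of_apply, Finset.prod_univ_sum, Fintype.piFinset_univ,
      Finset.mul_sum, Finset.sum_mul]
    rw [Finset.sum_comm]
    refine Finset.sum_congr rfl fun f _ => Finset.sum_congr rfl fun σ _ => ?_
    rw [Finset.prod_mul_distrib]; ring
  have h2 : ∀ e : Fin r ↪o Fin m, Matrix.det (Matrix.of fun i j => a i (e j)) *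
        Matrix.det (Matrix.of fun i j => b (e i) j) =
      ∑ σ : Equiv.Perm (Fin r), Matrix.det (Matrix.of fun i j => a i (e (σ j))) *
        ∏ i, b (e (σ i)) i := by
    intro e
    rw [Matrix.det_apply' (Matrix.of fun i j => b (e i) j), Finset.mul_sum]
    refine Finset.sum_congr rfl fun σ _ => ?_
    have := Matrix.det_permute' σ (Matrix.of fun i j => a i (e j))
    have h3 : (Matrix.of fun i j => a i (e (σ j))) =
      (Matrix.of fun i j => a i (e j)).submatrix id σ := rfl
    rw [h3, this]
    simp only [Matrix.of_apply]; ring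
  rw [h1]
  simp only [h2]
  rw [← Fintype.sum_prod_type' (f := fun (e : Fin r ↪o Fin m) (σ : Equiv.Perm (Fin r)) =>
    Matrix.det (Matrix.of fun i j => a i (e (σ j))) * ∏ i, b (e (σ i)) i)]
  symm
  refine Finset.sum_of_injOn (fun p : (Fin r ↪o Fin m) × Equiv.Perm (Fin r) => p.1 ∘ p.2)
    ?_ ?_ ?_ ?_
  · rintro ⟨e, σ⟩ _ ⟨e', σ'⟩ _ h
    simp only at h
    have hr : Set.range e = Set.range e' := by
      rw [← σ.surjective.range_comp e, h, σ'.surjective.range_comp e']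
    have he : e = e' := by
      have := (StrictMono.range_inj e.strictMono e'.strictMono).1 hr
      exact DFunLike.coe_injective this
    subst he
    have : σ = σ' := by
      ext i
      have := congrFun h i
      simp only [Function.comp] at this
      rw [e.injective this]
    rw [this]
  · intro _ _; simp
  · intro f _ hf
    have hni : ¬ Function.Injective f := by
      intro hi
      apply hf
      have hm : StrictMono (f ∘ Tuple.sort f) :=
        (Tuple.monotone_sort f).strictMono_of_injective (hi.comp (Tuple.sort f).injective)
      refine ⟨(OrderEmbedding.ofStrictMono _ hm, (Tuple.sort f)⁻¹), by simp, ?_⟩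
      ext i
      simp
    have : ∃ i j, f i = f j ∧ i ≠ j := by
      simpa [Function.Injective] using hni
    obtain ⟨i, j, hij, hne⟩ := this
    rw [Matrix.det_zero_of_column_eq hne, zero_mul]
    intro l; simp [hij]
  · intro _ _; rfl

lemma aux_cauchy (r : ℕ) : ∀ (x y : Fin r → ℝ), StrictMono x → StrictMono y →
    (∀ i, 0 < x i) → (∀ i, 0 < y i) →
    0 < Matrix.det (Matrix.of fun i j => 1 / (x i + y j)) := by
  induction r with
  | zero => intro x y _ _ _ _; simp
  | succ r ih =>
    intro x y hx hy px py
    have e1 : Matrix.det (Matrix.of fun i j => 1 / (x i + y j)) =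
        Matrix.det (Matrix.of (Fin.cons (fun j => 1 / (x 0 + y j)) (fun (i : Fin r) j =>
          1 / (x i.succ + y j) - (x 0 + y 0) / (x i.succ + y 0) * (1 / (x 0 + y j))) :
            Fin (r+1) → Fin (r+1) → ℝ)) := by
      refine Matrix.det_eq_of_forall_row_eq_smul_add_const
        (Fin.cons 0 fun i => (x 0 + y 0) / (x i.succ + y 0)) 0 (by simp) ?_
      intro i j
      refine Fin.cases ?_ (fun i => ?_) i <;> simp
    rw [e1, Matrix.det_succ_column_zero, Fin.sum_univ_succ]
    rw [Finset.sum_eq_zero]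
    · have e2 : (Matrix.of (Fin.cons (fun j => 1 / (x 0 + y j)) (fun (i : Fin r) j =>
          1 / (x i.succ + y j) - (x 0 + y 0) / (x i.succ + y 0) * (1 / (x 0 + y j))) :
            Fin (r+1) → Fin (r+1) → ℝ)).submatrix (Fin.succAbove 0) Fin.succ =
          Matrix.of fun i j => ((y (Fin.succ j) - y 0) / (x 0 + y (Fin.succ j))) *
            (Matrix.of fun i j => ((x (Fin.succ i) - x 0) / (x (Fin.succ i) + y 0)) *
              (Matrix.of fun i j : Fin r => 1 / (x i.succ + y j.succ)) i j) i j := by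
        ext i j
        have := px 0; have := py 0; have := px i.succ; have := py j.succ
        have : x i.succ + y j.succ ≠ 0 := by positivity
        have : x 0 + y j.succ ≠ 0 := by positivity
        have : x i.succ + y 0 ≠ 0 := by positivity
        simp
        field_simp
        ring
      rw [e2, Matrix.det_mul_row, Matrix.det_mul_column]
      have h3 := ih (fun i => x i.succ) (fun i => y i.succ)
        (hx.comp (Fin.strictMono_succ)) (hy.comp (Fin.strictMono_succ))
        (fun i => px _) (fun i => py _)
      have h4 : 0 < ∏ j : Fin r, ((y (Fin.succ j) - y 0) / (x 0 + y (Fin.succ j))) :=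
        Finset.prod_pos fun j _ => div_pos (sub_pos.2 (hy (Fin.succ_pos j)))
          (add_pos (px _) (py _))
      have h5 : 0 < ∏ j : Fin r, ((x (Fin.succ j) - x 0) / (x (Fin.succ j) + y 0)) :=
        Finset.prod_pos fun j _ => div_pos (sub_pos.2 (hx (Fin.succ_pos j)))
          (add_pos (px _) (py _))
      have h6 : 0 < 1 / (x 0 + y 0) := one_div_pos.2 (add_pos (px _) (py _))
      simp only [Fin.val_zero, pow_zero, one_mul, Matrix.of_apply, Fin.cons_zero, add_zero]
      positivity
    · intro i _
      have := px 0; have := py 0; have := px i.succ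
      have : x i.succ + y 0 ≠ 0 := by positivity
      have : x 0 + y 0 ≠ 0 := by positivity
      have h0 : 1 / (x i.succ + y 0) - (x 0 + y 0) / (x i.succ + y 0) * (1 / (x 0 + y 0)) = 0 := by
        field_simp; ring
      simp only [Matrix.of_apply, Fin.cons_succ, h0]
      simp

noncomputable def auxH (s j : ℕ) : ℝ := 1 / (((s : ℝ) + 1) + ((j : ℝ) + 1))

lemma auxH_pos {r : ℕ} (f g : Fin r → ℕ) (hf : StrictMono f) (hg : StrictMono g) :
    0 < Matrix.det (Matrix.of fun i j => auxH (f i) (g j)) := by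
  refine aux_cauchy r (fun i => (f i : ℝ) + 1) (fun i => (g i : ℝ) + 1) ?_ ?_ ?_ ?_
  · intro i j h; have := hf h; simpa using this
  · intro i j h; have := hg h; simpa using this
  · intro i; positivity
  · intro i; positivity

noncomputable def auxV (k s j : ℕ) : ℝ :=
  if s = 0 then (if j = 1 then 1 else 0) else if s = k then (if j = 2 * k - 1 then 1 else 0)
  else if j = 1 ∨ j = 2 * k - 1 then 0 else auxH s j

lemma auxV_pos (k : ℕ) (hk : 2 ≤ k) (r : ℕ) : ∀ (f g : Fin r → ℕ), StrictMono f → StrictMono g →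
    (∀ i, f i ≤ k) →
    (∀ i, f i = 0 ↔ g i = 1) → (∀ i, f i = k ↔ g i = 2 * k - 1) →
    0 < Matrix.det (Matrix.of fun i j => auxV k (f i) (g j)) := by
  induction r with
  | zero => intro f g _ _ _ _ _; simp
  | succ r ih =>
    intro f g hf hg hfk h0 h1
    by_cases c0 : f 0 = 0
    · have g0 := (h0 0).1 c0
      rw [Matrix.det_succ_row_zero, Fin.sum_univ_succ, Finset.sum_eq_zero]
      · have := ih (fun i => f i.succ) (fun i => g i.succ) (hf.comp Fin.strictMono_succ)
          (hg.comp Fin.strictMono_succ) (fun i => hfk _) (fun i => h0 _) (fun i => h1 _)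
        simpa [auxV, c0, g0, Matrix.submatrix] using this
      · intro i _
        have : g i.succ ≠ 1 := by
          have := hg (Fin.succ_pos i); omega
        simp [auxV, c0, this]
    by_cases c1 : f (Fin.last r) = k
    · have g1 := (h1 _).1 c1
      rw [Matrix.det_succ_row _ (Fin.last r), Fin.sum_univ_castSucc, Finset.sum_eq_zero]
      · have := ih (fun i => f i.castSucc) (fun i => g i.castSucc) (hf.comp Fin.strictMono_castSucc)
          (hg.comp Fin.strictMono_castSucc) (fun i => hfk _) (fun i => h0 _) (fun i => h1 _)
        have hk0 : k ≠ 0 := by omega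
        simpa [auxV, c1, g1, hk0, Matrix.submatrix] using this
      · intro i _
        have : g i.castSucc ≠ 2 * k - 1 := by
          have := hg (Fin.castSucc_lt_last i); omega
        have hk0 : k ≠ 0 := by omega
        simp [auxV, c1, this, hk0]
    have d0 : ∀ i, f i ≠ 0 := by
      intro i h
      have := hf.monotone (Fin.zero_le i); omega
    have d1 : ∀ i, f i ≠ k := by
      intro i h
      have h2 := (h1 i).1 h
      have := hf.monotone (Fin.le_last i)
      have := hfk (Fin.last r)
      omega
    have := auxH_pos f g hf hg
    convert this using 3
    funext i j
    simp only [auxV, d0, d1, if_false]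
    have := mt (h0 j).2 (d0 j)
    have := mt (h1 j).2 (d1 j)
    simp [*]

lemma auxV_zero (k : ℕ) (hk : 2 ≤ k) (r : ℕ) (f g : Fin r → ℕ) (hf : StrictMono f)
    (hg : StrictMono g) (hfk : ∀ i, f i ≤ k) (hg1 : ∀ i, 1 ≤ g i) (hgn : ∀ i, g i ≤ 2 * k - 1)
    (h : ¬ ((∀ i, f i = 0 ↔ g i = 1) ∧ (∀ i, f i = k ↔ g i = 2 * k - 1))) :
    Matrix.det (Matrix.of fun i j => auxV k (f i) (g j)) = 0 := by
  have hk0 : k ≠ 0 := by omega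
  have hk1 : 1 ≠ 2 * k - 1 := by omega
  have key : ∃ i, (f i = 0 ∧ g i ≠ 1) ∨ (f i ≠ 0 ∧ g i = 1) ∨ (f i = k ∧ g i ≠ 2 * k - 1) ∨
      (f i ≠ k ∧ g i = 2 * k - 1) := by
    by_contra hc
    push Not at hc
    apply h
    constructor <;> intro i <;> have := hc i <;> tauto
  obtain ⟨i, h | h | h | h⟩ := key
  · refine Matrix.det_eq_zero_of_row_eq_zero i fun j => ?_
    have hij : i ≤ j := by
      by_contra hc; have := hf (not_le.1 hc); omega
    have := hg.monotone hij
    have := hg1 i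
    have : g j ≠ 1 := by omega
    simp [auxV, h.1, this]
  · refine Matrix.det_eq_zero_of_column_eq_zero i fun j => ?_
    have hij : i ≤ j := by
      by_contra hc; have := hg (not_le.1 hc); have := hg1 j; omega
    have := hf.monotone hij
    have : f j ≠ 0 := by omega
    simp [auxV, h.2, this, hk1]
  · refine Matrix.det_eq_zero_of_row_eq_zero i fun j => ?_
    have hij : j ≤ i := by
      by_contra hc; have := hf (not_le.1 hc); have := hfk j; omega
    have := hg.monotone hij
    have := hgn i
    have : g j ≠ 2 * k - 1 := by omega
    simp [auxV, h.1, this, hk0]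
  · refine Matrix.det_eq_zero_of_column_eq_zero i fun j => ?_
    have hij : j ≤ i := by
      by_contra hc; have := hg (not_le.1 hc); have := hgn j; omega
    have := hf.monotone hij
    have := hfk i
    have : f j ≠ k := by omega
    simp [auxV, h.2, this, hk1.symm]

noncomputable def auxD (k u s : ℕ) : ℝ := ∑ t : Fin k, auxH u t * auxH t s

lemma auxD_pos (k r : ℕ) (hr : r ≤ k) (f g : Fin r → ℕ) (hf : StrictMono f) (hg : StrictMono g) :
    0 < Matrix.det (Matrix.of fun i j => auxD k (f i) (g j)) := by
  unfold auxD
  rw [aux_cb (fun i (t : Fin k) => auxH (f i) t) (fun (t : Fin k) j => auxH t (g j))]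
  refine Finset.sum_pos (fun e _ => mul_pos ?_ ?_) ⟨Fin.castLEOrderEmb hr, Finset.mem_univ _⟩
  · exact auxH_pos f (fun j => (e j : ℕ)) hf (fun i j h => e.strictMono h)
  · exact auxH_pos (fun j => (e j : ℕ)) g (fun i j h => e.strictMono h) hg

lemma auxD_zero (k r : ℕ) (hr : k < r) (f g : Fin r → ℕ) :
    Matrix.det (Matrix.of fun i j => auxD k (f i) (g j)) = 0 := by
  unfold auxD
  rw [aux_cb (fun i (t : Fin k) => auxH (f i) t) (fun (t : Fin k) j => auxH t (g j))]
  refine Finset.sum_eq_zero fun e _ => ?_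
  have := Fintype.card_le_of_injective e e.injective
  simp at this; omega

noncomputable def auxM (k u w : ℕ) : ℝ := ∑ s : Fin (k + 1), auxD k u s * auxV k s w

lemma auxM_zero (k : ℕ) (hk : 2 ≤ k) (r : ℕ) (f g : Fin r → ℕ)
    (hg : StrictMono g) (hg1 : ∀ i, 1 ≤ g i) (hgn : ∀ i, g i ≤ 2 * k - 1)
    (h : k + 1 ≤ r ∨ (r = k ∧ (∀ i, g i ≠ 1) ∧ ∀ i, g i ≠ 2 * k - 1)) :
    Matrix.det (Matrix.of fun i j => auxM k (f i) (g j)) = 0 := by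
  unfold auxM
  rw [aux_cb (fun i (t : Fin (k+1)) => auxD k (f i) t)
    (fun (t : Fin (k+1)) j => auxV k t (g j))]
  refine Finset.sum_eq_zero fun e _ => ?_
  rcases h with h | ⟨h, h1, h2⟩
  · rw [auxD_zero k r (by omega) f (fun j => (e j : ℕ)), zero_mul]
  · rw [auxV_zero k hk r (fun j => (e j : ℕ)) g (fun i j h => e.strictMono h) hg
      (fun i => by have := (e i).2; omega) hg1 hgn, mul_zero]
    rintro ⟨c0, c1⟩
    have := Finset.card_le_card_of_injOn (s := (Finset.univ : Finset (Fin r)))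
      (t := Finset.Ioo 0 k) (fun j => (e j : ℕ)) (by
        intro i _
        have a1 := mt (c0 i).1 (h1 i)
        have a2 := mt (c1 i).1 (h2 i)
        have := (e i).2
        simp only [Finset.coe_Ioo, Set.mem_Ioo]
        omega) (fun i _ j _ h => e.injective (Fin.ext h))
    simp at this
    omega

lemma auxM_pos (k : ℕ) (hk : 2 ≤ k) (r : ℕ) (f g : Fin r → ℕ) (hf : StrictMono f)
    (hg : StrictMono g) (hg1 : ∀ i, 1 ≤ g i) (hgn : ∀ i, g i ≤ 2 * k - 1)
    (h : ¬ (k + 1 ≤ r ∨ (r = k ∧ (∀ i, g i ≠ 1) ∧ ∀ i, g i ≠ 2 * k - 1))) :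
    0 < Matrix.det (Matrix.of fun i j => auxM k (f i) (g j)) := by
  have hrk : r ≤ k := by omega
  unfold auxM
  rw [aux_cb (fun i (t : Fin (k+1)) => auxD k (f i) t)
    (fun (t : Fin (k+1)) j => auxV k t (g j))]
  have hD : ∀ e : Fin r ↪o Fin (k+1), 0 < Matrix.det (Matrix.of fun i j => auxD k (f i) (e j)) :=
    fun e => auxD_pos k r hrk f (fun j => (e j : ℕ)) hf (fun i j h => e.strictMono h)
  refine Finset.sum_pos' (fun e _ => mul_nonneg (hD e).le ?_) ?_
  · by_cases c : (∀ i, (e i : ℕ) = 0 ↔ g i = 1) ∧ (∀ i, (e i : ℕ) = k ↔ g i = 2 * k - 1)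
    · exact (auxV_pos k hk r (fun j => (e j : ℕ)) g (fun i j h => e.strictMono h) hg
        (fun i => by have := (e i).2; omega) c.1 c.2).le
    · exact (auxV_zero k hk r (fun j => (e j : ℕ)) g (fun i j h => e.strictMono h) hg
        (fun i => by have := (e i).2; omega) hg1 hgn c).ge
  · -- the chosen rows
    have hex : ∃ q : Fin r → ℕ, StrictMono q ∧ (∀ i, q i < k + 1) ∧ (∀ i, q i = 0 ↔ g i = 1) ∧
        (∀ i, q i = k ↔ g i = 2 * k - 1) := by
      have hone : ∀ i j : Fin r, g i = 1 → j < i → False := by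
        intro i j h1 h2; have := hg h2; have := hg1 j; omega
      have hn : ∀ i j : Fin r, g i = 2 * k - 1 → i < j → False := by
        intro i j h1 h2; have := hg h2; have := hgn j; omega
      by_cases c : ∃ i, g i = 1
      · obtain ⟨i0, hi0⟩ := c
        have z0 : (i0 : ℕ) = 0 := by
          by_contra hc
          exact hone i0 ⟨0, by omega⟩ hi0 (Fin.lt_def.2 (by simp; omega))
        refine ⟨fun i => if g i = 2 * k - 1 then k else i, ?_, ?_, ?_, ?_⟩
        · intro i j hij
          have := hn i j
          have : (i : ℕ) < j := hij
          have := j.2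
          dsimp only
          split_ifs <;> first | omega | (exfalso; tauto)
        · intro i; dsimp only; split_ifs <;> omega
        · intro i
          have e1 : g i = 1 ↔ (i : ℕ) = 0 := by
            constructor
            · intro h1; have : i = i0 := hg.injective (h1.trans hi0.symm)
              rw [this, z0]
            · intro h1; have : i = i0 := Fin.ext (by omega)
              rw [this, hi0]
          dsimp only; split_ifs <;> omega
        · intro i; dsimp only; split_ifs <;> omega
      · push Not at c
        refine ⟨fun i => if g i = 2 * k - 1 then k else (i : ℕ) + 1, ?_, ?_, ?_, ?_⟩
        · intro i j hij
          have := hn i j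
          have : (i : ℕ) < j := hij
          have := j.2
          dsimp only
          split_ifs <;> first | omega | (exfalso; tauto)
        · intro i; dsimp only; split_ifs <;> omega
        · intro i
          have := c i
          simp only [this, iff_false]; intro h3; split_ifs at h3; omega
        · intro i; dsimp only; split_ifs with hh
          · simp [hh]
          · simp only [hh, iff_false]
            intro h3
            apply h
            right
            have := i.2
            refine ⟨by omega, c, fun j hj => ?_⟩
            rcases lt_trichotomy i j with h4 | h4 | h4
            · have : (i : ℕ) < j := h4
              omega
            · exact hh (h4 ▸ hj)
            · exact hn j i hj h4
    obtain ⟨q, hq, hqk, q0, q1⟩ := hex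
    refine ⟨OrderEmbedding.ofStrictMono (fun i => (⟨q i, hqk i⟩ : Fin (k+1)))
      (fun i j h => hq h), Finset.mem_univ _, mul_pos (hD _) ?_⟩
    exact auxV_pos k hk r q g hq hg (fun i => by have := hqk i; omega) q0 q1

/-- for every `k ≥ 2` there is a totally nonnegative `(2k-1) × (2k-1)` matrix
(1-indexed) whose minor on rows `U`, columns `W` (with `|U| = |W| = r`) vanishes exactly
when `r ≥ k+1`, or `r = k` and `1 ∉ W` and `2k-1 ∉ W`; all other minors are strictly
positive. -/
theorem stmt_7 (k : ℕ) (hk : 2 ≤ k) :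
    ∃ M : ℕ → ℕ → ℝ,
      (∀ U W : Finset ℕ, U ⊆ Finset.Icc 1 (2 * k - 1) → W ⊆ Finset.Icc 1 (2 * k - 1) →
        0 ≤ minorN M U W) ∧
      (∀ U W : Finset ℕ, U ⊆ Finset.Icc 1 (2 * k - 1) → W ⊆ Finset.Icc 1 (2 * k - 1) →
        U.card = W.card → 1 ≤ U.card →
        (minorN M U W = 0 ↔
          (k + 1 ≤ U.card ∨ (U.card = k ∧ 1 ∉ W ∧ 2 * k - 1 ∉ W))) ∧
        (¬(k + 1 ≤ U.card ∨ (U.card = k ∧ 1 ∉ W ∧ 2 * k - 1 ∉ W)) →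
          0 < minorN M U W)) := by
  have main : ∀ U W : Finset ℕ, W ⊆ Finset.Icc 1 (2 * k - 1) → U.card = W.card →
      ((k + 1 ≤ U.card ∨ (U.card = k ∧ 1 ∉ W ∧ 2 * k - 1 ∉ W)) → minorN (auxM k) U W = 0) ∧
      (¬ (k + 1 ≤ U.card ∨ (U.card = k ∧ 1 ∉ W ∧ 2 * k - 1 ∉ W)) →
        0 < minorN (auxM k) U W) := by
    intro U W hW hc
    have hmem : ∀ i, (W.orderIsoOfFin hc.symm i).val ∈ W := fun i =>
      (W.orderIsoOfFin hc.symm i).2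
    have hsurj : ∀ x : ℕ, x ∉ W ↔ ∀ i, (W.orderIsoOfFin hc.symm i).val ≠ x := by
      intro x
      constructor
      · intro h i hi; exact h (hi ▸ hmem i)
      · intro h hx
        exact h ((W.orderIsoOfFin hc.symm).symm ⟨x, hx⟩) (by simp)
    have hg1 : ∀ i, 1 ≤ (W.orderIsoOfFin hc.symm i).val := fun i =>
      (Finset.mem_Icc.1 (hW (hmem i))).1
    have hgn : ∀ i, (W.orderIsoOfFin hc.symm i).val ≤ 2 * k - 1 := fun i =>
      (Finset.mem_Icc.1 (hW (hmem i))).2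
    have hf : StrictMono fun i => (U.orderIsoOfFin rfl i).val := fun i j h =>
      (U.orderIsoOfFin rfl).strictMono h
    have hg : StrictMono fun i => (W.orderIsoOfFin hc.symm i).val := fun i j h =>
      (W.orderIsoOfFin hc.symm).strictMono h
    unfold minorN
    rw [dif_pos hc, hsurj, hsurj]
    exact ⟨auxM_zero k hk U.card _ _ hg hg1 hgn, auxM_pos k hk U.card _ _ hf hg hg1 hgn⟩
  refine ⟨auxM k, ?_, ?_⟩
  · intro U W _ hW
    by_cases hc : U.card = W.card
    · by_cases hb : (k + 1 ≤ U.card ∨ (U.card = k ∧ 1 ∉ W ∧ 2 * k - 1 ∉ W))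
      · exact ((main U W hW hc).1 hb).ge
      · exact ((main U W hW hc).2 hb).le
    · unfold minorN; rw [dif_neg hc]
  · intro U W _ hW hc _
    refine ⟨⟨fun h0 => ?_, (main U W hW hc).1⟩, (main U W hW hc).2⟩
    by_contra hb
    exact ((main U W hW hc).2 hb).ne' h0
end

section
/- Let X = (x_{ij}) be an m×n matrix with positive real entries and let ȳ_{i,j,k} be the associated noncrossing-lattice-path generating sums. Then for all 2 ≤ i ≤ m, 2 ≤ j ≤ n and 1 ≤ k ≤ min(i,j) − 1: ȳ_{i,j,k} · ȳ_{i−1,j−1,k−1} = x_{ij} · ( ȳ_{i−1,j,k} · ȳ_{i,j−1,k−1} + ȳ_{i−1,j,k−1} · ȳ_{i,j−1,k} ). -/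
/-- One step of a lattice path: exactly one coordinate increases by exactly `1`. -/
def GridStep (u v : ℕ × ℕ) : Prop := v = (u.1 + 1, u.2) ∨ v = (u.1, u.2 + 1)

/-- `p` is a lattice path in `{1,…,m} × {1,…,n}` from `src` to `tgt`. -/
def IsGridPath (m n : ℕ) (src tgt : ℕ × ℕ) (p : List (ℕ × ℕ)) : Prop :=
  p.head? = some src ∧ p.getLast? = some tgt ∧
  (∀ v ∈ p, 1 ≤ v.1 ∧ v.1 ≤ m ∧ 1 ≤ v.2 ∧ v.2 ≤ n) ∧
  List.Chain' GridStep p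

/-- A tuple of pairwise vertex-disjoint lattice paths in `{1,…,m} × {1,…,n}`, the `l`-th one
going from the `l`-th entry of `src` to the `l`-th entry of `tgt`. -/
structure NCTuple (m n : ℕ) (src tgt : List (ℕ × ℕ)) where
  path : List (List (ℕ × ℕ))
  hlen : path.length = src.length
  hlen' : path.length = tgt.length
  valid : ∀ l, l < path.length →
    IsGridPath m n (src.getD l (0, 0)) (tgt.getD l (0, 0)) (path.getD l [])
  disj : ∀ l l', l < path.length → l' < path.length → l ≠ l' →
    ∀ v ∈ path.getD l [], v ∉ path.getD l' []

/-- `ȳ_{i,j,k}`: the sum over all `k`-tuples `(π_1,…,π_k)` of pairwise vertex-disjoint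
lattice paths, with `π_l` going from `(1,l)` to `(i, j-k+l)`, of
`Π_l Π_{(r,s) ∈ π_l} x_{r,s}`. -/
noncomputable def ybar (m n : ℕ) (x : ℕ → ℕ → ℝ) (i j k : ℕ) : ℝ :=
  ∑ᶠ T : NCTuple m n ((List.range k).map fun l => (1, l + 1))
      ((List.range k).map fun l => (i, j - k + (l + 1))),
    (T.path.map fun p => (p.map fun v => x v.1 v.2).prod).prod


theorem pl_D (q : ℕ) (W : Fin q → Fin (q+2) → ℝ) (a b c e : Fin (q+2) → ℝ) :
    let D := fun p s : Fin (q+2) → ℝ =>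
      Matrix.det (Matrix.of (Fin.cons p (Fin.snoc W s) : Fin (q+2) → Fin (q+2) → ℝ))
    D a c * D b e = D b c * D a e + D a b * D c e := by
  intro D
  have hD : ∀ p s, D p s = Matrix.detRowAlternating (Fin.cons p (Fin.snoc W s) : Fin (q+2) → Fin (q+2) → ℝ) := fun _ _ => rfl
  have hupd0 : ∀ p s p' : Fin (q+2) → ℝ, Function.update (Fin.cons p (Fin.snoc W s) : Fin (q+2) → Fin (q+2) → ℝ) 0 p' = Fin.cons p' (Fin.snoc W s) := by
    intro p s p'; exact Fin.update_cons_zero _ _ _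
  have hupdl : ∀ p s p' : Fin (q+2) → ℝ, Function.update (Fin.cons p (Fin.snoc W s) : Fin (q+2) → Fin (q+2) → ℝ) (Fin.last (q+1)) p' = Fin.cons p (Fin.snoc W p') := by
    intro p s p'
    rw [← Fin.succ_last, ← Fin.cons_update, Fin.update_snoc_last]
  -- linear functional
  let L : (Fin (q+2) → ℝ) →ₗ[ℝ] ℝ :=
    (Matrix.detRowAlternating (n := Fin (q+2)) (R := ℝ)).toMultilinearMap.toLinearMap (Fin.cons 0 (Fin.snoc W e)) 0
  have hL : ∀ p, L p = D p e := by
    intro p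
    simp only [L, MultilinearMap.toLinearMap_apply, hupd0]; rfl
  have hLW : ∀ i, L (W i) = 0 := by
    intro i
    rw [hL, hD]
    refine AlternatingMap.map_eq_zero_of_eq _ _ (i := 0) (j := i.castSucc.succ) ?_ (Fin.succ_ne_zero _).symm
    simp
  let A : Matrix (Fin (q+2)) (Fin (q+2)) ℝ := Matrix.of (Fin.cons a (Fin.snoc W b))
  have key := Matrix.mulVec_cramer A.transpose c
  have k2 := congrArg L key
  rw [Matrix.mulVec_eq_sum] at k2
  rw [map_sum, Fin.sum_univ_succ, Fin.sum_univ_castSucc] at k2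
  simp only [Matrix.cramer_transpose_apply, Matrix.transpose_transpose, map_smul, Matrix.det_transpose] at k2
  have r0 : A 0 = a := rfl
  have rl : A (Fin.last q).succ = b := by
    change (Fin.cons a (Fin.snoc W b) : Fin (q+2) → Fin (q+2) → ℝ) (Fin.last q).succ = b
    rw [Fin.cons_succ, Fin.snoc_last]
  have rm : ∀ i : Fin q, A i.castSucc.succ = W i := by
    intro i
    change (Fin.cons a (Fin.snoc W b) : Fin (q+2) → Fin (q+2) → ℝ) i.castSucc.succ = W i
    rw [Fin.cons_succ, Fin.snoc_castSucc]
  have dA : A.det = D a b := rfl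
  have d0 : (A.updateRow 0 c).det = D c b := congrArg Matrix.det (hupd0 a b c)
  have dl : (A.updateRow (Fin.last q).succ c).det = D a c := congrArg Matrix.det (hupdl a b c)
  simp only [op_smul_eq_smul, map_smul, r0, rl, rm, hLW] at k2
  simp only [dA, d0, dl, hL, smul_eq_mul, mul_zero, Finset.sum_const_zero, zero_add] at k2
  have hs : D c b = - D b c := by
    rw [hD, hD]
    rw [← AlternatingMap.map_swap _ _ (i := 0) (j := Fin.last (q+1)) (by simp [Fin.ext_iff])]
    congr 1
    rw [Equiv.swap_comm]
    funext i
    refine Fin.cases ?_ (fun i => ?_) i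
    · simp [← Fin.succ_last]
    · refine Fin.lastCases ?_ (fun i => ?_) i
      · simp [← Fin.succ_last]
      · have : Equiv.swap (Fin.last (q+1)) 0 i.castSucc.succ = i.castSucc.succ := by
          apply Equiv.swap_apply_of_ne_of_ne
          · simp [Fin.ext_iff]; omega
          · simp
        simp [this]
  rw [hs] at k2
  linarith

theorem det_snoc_e (q : ℕ) (M : Fin (q+1) → Fin (q+2) → ℝ) :
    Matrix.det (Matrix.of (Fin.snoc M (Pi.single (Fin.last (q+1)) 1) : Fin (q+2) → Fin (q+2) → ℝ))
     = Matrix.det (Matrix.of fun i j : Fin (q+1) => M i j.castSucc) := by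
  rw [Matrix.det_succ_row _ (Fin.last (q+1)), Finset.sum_eq_single (Fin.last (q+1))]
  · simp only [Matrix.of_apply, Fin.snoc_last, Pi.single_eq_same, Fin.succAbove_last]
    rw [← two_mul, pow_mul]
    simp
    congr 1
    ext i j
    simp
  · intro b _ hb
    simp [hb]
  · simp

theorem det_cons_snoc (q : ℕ) (W : Fin q → Fin (q+1) → ℝ) (b : Fin (q+1) → ℝ) :
    Matrix.det (Matrix.of (Fin.snoc W b : Fin (q+1) → Fin (q+1) → ℝ)) =
      (-1)^q * Matrix.det (Matrix.of (Fin.cons b W : Fin (q+1) → Fin (q+1) → ℝ)) := by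
  rw [Fin.snoc_eq_cons_rotate]
  have := Matrix.det_permute (finRotate (q+1)) (Matrix.of (Fin.cons b W : Fin (q+1) → Fin (q+1) → ℝ))
  rw [sign_finRotate] at this
  push_cast at this
  exact this

theorem pluck (q : ℕ) (a b c : Fin (q+2) → ℝ) (W : Fin q → Fin (q+2) → ℝ) :
    Matrix.det (Matrix.of (Fin.cons a (Fin.snoc W c) : Fin (q+2) → Fin (q+2) → ℝ)) *
      Matrix.det (Matrix.of fun i j : Fin (q+1) => (Fin.cons b W : Fin (q+1) → Fin (q+2) → ℝ) i j.castSucc) =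
    Matrix.det (Matrix.of (Fin.cons b (Fin.snoc W c) : Fin (q+2) → Fin (q+2) → ℝ)) *
      Matrix.det (Matrix.of fun i j : Fin (q+1) => (Fin.cons a W : Fin (q+1) → Fin (q+2) → ℝ) i j.castSucc) +
    Matrix.det (Matrix.of fun i j : Fin (q+1) => (Fin.snoc W c : Fin (q+1) → Fin (q+2) → ℝ) i j.castSucc) *
    Matrix.det (Matrix.of (Fin.cons a (Fin.cons b W) : Fin (q+2) → Fin (q+2) → ℝ)) := by
  have h := pl_D q W a b c (Pi.single (Fin.last (q+1)) 1)
  simp only at h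
  have e1 : ∀ p : Fin (q+2) → ℝ, Matrix.det (Matrix.of (Fin.cons p (Fin.snoc W (Pi.single (Fin.last (q+1)) 1)) : Fin (q+2) → Fin (q+2) → ℝ)) = Matrix.det (Matrix.of fun i j : Fin (q+1) => (Fin.cons p W : Fin (q+1) → Fin (q+2) → ℝ) i j.castSucc) := by
    intro p
    rw [← det_snoc_e, Fin.cons_snoc_eq_snoc_cons]
  have e2 : Matrix.det (Matrix.of fun i j : Fin (q+1) => (Fin.snoc W c : Fin (q+1) → Fin (q+2) → ℝ) i j.castSucc) = (-1)^q * Matrix.det (Matrix.of fun i j : Fin (q+1) => (Fin.cons c W : Fin (q+1) → Fin (q+2) → ℝ) i j.castSucc) := by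
    have := det_cons_snoc q (fun i j => W i j.castSucc) (fun j => c j.castSucc)
    convert this using 2
    · ext i j
      refine Fin.lastCases ?_ (fun i => ?_) i <;> simp
    · congr 1
      ext i j
      refine Fin.cases ?_ (fun i => ?_) i <;> simp
  have e3 : Matrix.det (Matrix.of (Fin.cons a (Fin.snoc W b) : Fin (q+2) → Fin (q+2) → ℝ)) = (-1)^q * Matrix.det (Matrix.of (Fin.cons a (Fin.cons b W) : Fin (q+2) → Fin (q+2) → ℝ)) := by
    have h1 := det_cons_snoc (q+1) (Fin.cons a W) b
    rw [← Fin.cons_snoc_eq_snoc_cons] at h1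
    rw [h1, pow_succ]
    have h2 : Matrix.det (Matrix.of (Fin.cons a (Fin.cons b W) : Fin (q+2) → Fin (q+2) → ℝ)) = - Matrix.det (Matrix.of (Fin.cons b (Fin.cons a W) : Fin (q+2) → Fin (q+2) → ℝ)) := by
      have := AlternatingMap.map_swap (Matrix.detRowAlternating (n := Fin (q+2)) (R := ℝ)) (Fin.cons b (Fin.cons a W) : Fin (q+2) → Fin (q+2) → ℝ) (i := 0) (j := 1) (by simp)
      change _ = - Matrix.det (Matrix.of (Fin.cons b (Fin.cons a W) : Fin (q+2) → Fin (q+2) → ℝ)) at this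
      rw [← this]
      change Matrix.det _ = Matrix.det _
      congr 1
      funext i
      refine Fin.cases ?_ (fun i => ?_) i
      · simp; rfl
      · refine Fin.cases ?_ (fun i => ?_) i
        · simp; rfl
        · have : Equiv.swap (0 : Fin (q+2)) 1 i.succ.succ = i.succ.succ := by
            apply Equiv.swap_apply_of_ne_of_ne <;> simp [Fin.ext_iff]
          simp [this]; rfl
    rw [h2]; ring
  rw [e1, e1, e1, e3] at h
  rw [h, e2]; ring

/-- path generating function -/
noncomputable def GG (x : ℕ → ℕ → ℝ) (a : ℕ) : ℕ → ℕ → ℝ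
  | 0, c => if c = a then 1 else 0
  | _+1, 0 => 0
  | r+1, c+1 => x (r+1) (c+1) * (GG x a r (c+1) + GG x a (r+1) c)

/-- reversed path -/
def RP (a : ℕ) : List (ℕ × ℕ) → ℕ × ℕ → Prop
  | [], t => t = (0, a)
  | v :: p, t => v = t ∧ 1 ≤ t.1 ∧ 1 ≤ t.2 ∧ (RP a p (t.1 - 1, t.2) ∨ RP a p (t.1, t.2 - 1))

theorem RP_unique {a : ℕ} {p : List (ℕ × ℕ)} {t t' : ℕ × ℕ} (h : RP a p t) (h' : RP a p t') :
    t = t' := by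
  cases p with
  | nil => rw [RP] at h h'; rw [h, h']
  | cons v p => rw [RP] at h h'; rw [← h.1, ← h'.1]

theorem RP_le {a : ℕ} {p : List (ℕ × ℕ)} {t v : ℕ × ℕ} (h : RP a p t) (hv : v ∈ p) :
    v.1 ≤ t.1 ∧ v.2 ≤ t.2 ∧ 1 ≤ v.1 := by
  induction p generalizing t with
  | nil => simp at hv
  | cons w p ih =>
    rw [RP] at h
    obtain ⟨h1, h2, h3, h4⟩ := h
    rcases List.mem_cons.1 hv with rfl | hv
    · subst h1; exact ⟨le_rfl, le_rfl, h2⟩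
    · rcases h4 with h4 | h4
      · have := ih h4 hv; simp at this; omega
      · have := ih h4 hv; simp at this; omega

/-- families of vertex disjoint reversed paths -/
def VV (k : ℕ) (t : Fin k → ℕ × ℕ) : Set (Fin k → List (ℕ × ℕ)) :=
  {p | (∀ l : Fin k, RP ((l : ℕ) + 1) (p l) (t l)) ∧ ∀ l l', l ≠ l' → ∀ v ∈ p l, v ∉ p l'}

/-- weight -/
noncomputable def wt (x : ℕ → ℕ → ℝ) (k : ℕ) (p : Fin k → List (ℕ × ℕ)) : ℝ :=
  ∏ l, ((p l).map fun v => x v.1 v.2).prod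

/-- matrix -/
noncomputable def MM (x : ℕ → ℕ → ℝ) (k : ℕ) (t : Fin k → ℕ × ℕ) : Matrix (Fin k) (Fin k) ℝ :=
  Matrix.of fun b a => GG x (a + 1) (t b).1 (t b).2

theorem MM_update (x : ℕ → ℕ → ℝ) (k : ℕ) (t : Fin k → ℕ × ℕ) (l : Fin k) (s : ℕ × ℕ) :
    MM x k (Function.update t l s) = (MM x k t).updateRow l (fun a => GG x (a + 1) s.1 s.2) := by
  ext b a
  by_cases h : b = l
  · subst h; simp [MM]
  · simp [MM, h]

theorem fin_strictMono_id {k : ℕ} (f : Fin k → Fin k) (hf : StrictMono f) : f = id := by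
  have := hf.injective
  have hs : Function.Surjective f := Finite.surjective_of_injective this
  have e : (hf.orderIsoOfSurjective f hs) = OrderIso.refl _ := Subsingleton.elim _ _
  funext i
  have := DFunLike.congr_fun e i
  simpa using this

/-- consing at place `l` -/
def consAt {k : ℕ} (l : Fin k) (v : ℕ × ℕ) (p : Fin k → List (ℕ × ℕ)) : Fin k → List (ℕ × ℕ) :=
  Function.update p l (v :: p l)

theorem consAt_inj {k : ℕ} (l : Fin k) (v : ℕ × ℕ) : Function.Injective (consAt l v) := by
  intro p p' h
  funext b
  have := congrFun h b
  by_cases hb : b = l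
  · subst hb; simpa [consAt] using this
  · simpa [consAt, hb] using this

theorem wt_consAt (x : ℕ → ℕ → ℝ) {k : ℕ} (l : Fin k) (v : ℕ × ℕ) (p : Fin k → List (ℕ × ℕ)) :
    wt x k (consAt l v p) = x v.1 v.2 * wt x k p := by
  unfold wt
  rw [← Finset.mul_prod_erase _ _ (Finset.mem_univ l), ← Finset.mul_prod_erase _ _ (Finset.mem_univ l)]
  rw [← mul_assoc]
  congr 1
  · simp [consAt]
  · apply Finset.prod_congr rfl
    intro b hb
    have : b ≠ l := by simpa using hb
    simp [consAt, this]

theorem lgv (x : ℕ → ℕ → ℝ) (k : ℕ) (N : ℕ) : ∀ (t : Fin k → ℕ × ℕ),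
    (∑ l, ((t l).1 + (t l).2) = N) →
    (∀ l l', l < l' → (t l').1 ≤ (t l).1 ∧ (t l).2 ≤ (t l').2) →
    (VV k t).Finite ∧ ∑ᶠ p ∈ VV k t, wt x k p = (MM x k t).det := by
  induction N using Nat.strong_induction_on with
  | _ N ih =>
  intro t hN hW
  have empty : VV k t = ∅ → (MM x k t).det = 0 →
      (VV k t).Finite ∧ ∑ᶠ p ∈ VV k t, wt x k p = (MM x k t).det := by
    intro h1 h2
    rw [h1, h2]; simp
  by_cases hinj : ¬ Function.Injective t
  · -- two equal sinks
    simp only [Function.Injective, not_forall] at hinj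
    obtain ⟨l, l', hll, hne⟩ := hinj
    apply empty
    · rw [Set.eq_empty_iff_forall_notMem]
      rintro p ⟨hp, hd⟩
      have h1 := hp l
      have h2 := hp l'
      rw [← hll] at h2
      cases h : p l with
      | nil =>
        rw [h, RP] at h1
        cases h' : p l' with
        | nil =>
          rw [h', RP, h1] at h2
          apply hne; ext; simpa using h2
        | cons w q =>
          rw [h', RP, h1] at h2
          simp at h2
      | cons v q =>
        rw [h, RP] at h1
        cases h' : p l' with
        | nil =>
          rw [h', RP] at h2
          rw [h2] at h1
          simp at h1
        | cons w q' =>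
          rw [h', RP] at h2
          refine hd l l' hne v (by simp [h]) ?_
          simp [h', h1.1, h2.1]
    · apply Matrix.det_zero_of_row_eq hne
      ext a
      simp [MM, hll]
  push Not at hinj
  by_cases h0 : ∀ l, (t l).1 = 0
  · -- base
    by_cases hid : ∀ l : Fin k, t l = (0, (l : ℕ) + 1)
    · have hV : VV k t = {fun _ => []} := by
        ext p
        constructor
        · rintro ⟨hp, hd⟩
          rw [Set.mem_singleton_iff]
          funext l
          have := hp l
          cases h : p l with
          | nil => rfl
          | cons v q => rw [h, RP, hid l] at this; simp at this
        · rintro rfl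
          refine ⟨fun l => ?_, ?_⟩
          · rw [RP, hid l]
          · simp
      have hM : MM x k t = 1 := by
        ext b a
        simp only [MM, Matrix.of_apply, hid, GG, Matrix.one_apply, Fin.ext_iff]
        simp
      rw [hV, hM]
      simp [wt]
    · apply empty
      · rw [Set.eq_empty_iff_forall_notMem]
        rintro p ⟨hp, hd⟩
        apply hid
        intro l
        have h := hp l
        cases h' : p l with
        | nil => rw [h', RP] at h; exact h
        | cons v q => rw [h', RP, h0 l] at h; simp at h
      · by_contra hdet
        apply hid
        have hr : ∀ l, ∃ a : Fin k, (t l).2 = a + 1 := by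
          intro l
          by_contra hno
          push Not at hno
          apply hdet
          apply Matrix.det_eq_zero_of_row_eq_zero l
          intro a
          simp [MM, h0 l, GG, hno a]
        choose f hf using hr
        have hmono : StrictMono f := by
          intro l l' hl
          have h1 := (hW l l' hl).2
          have h2 : (t l).2 ≠ (t l').2 := by
            intro h
            apply hl.ne
            apply hinj
            ext
            · rw [h0, h0]
            · exact h
          rw [hf, hf] at h1 h2
          rw [Fin.lt_def]; omega
        have := fin_strictMono_id f hmono
        intro l
        ext
        · exact h0 l
        · rw [hf, this]; rfl
  · push Not at h0
    obtain ⟨l0, hl0⟩ := h0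
    obtain ⟨l, hl, hmax⟩ := Finset.exists_max_image (Finset.univ.filter fun l => (t l).1 ≠ 0)
      (fun l => (t l).1 + (t l).2) ⟨l0, by simpa using hl0⟩
    have hl : (t l).1 ≠ 0 := by simpa using hl
    have hmx : ∀ b, b ≠ l → ¬ ((t l).1 ≤ (t b).1 ∧ (t l).2 ≤ (t b).2) := by
      rintro b hb ⟨h1, h2⟩
      have := hmax b (by simp; omega)
      apply hb
      apply hinj
      ext <;> omega
    clear hmax
    obtain ⟨r, hr⟩ : ∃ r, (t l).1 = r + 1 := Nat.exists_eq_succ_of_ne_zero hl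
    by_cases hc0 : (t l).2 = 0
    · apply empty
      · rw [Set.eq_empty_iff_forall_notMem]
        rintro p ⟨hp, hd⟩
        have h := hp l
        cases h' : p l with
        | nil => rw [h', RP] at h; rw [h] at hl; simp at hl
        | cons v q => rw [h', RP, hc0] at h; simp at h
      · apply Matrix.det_eq_zero_of_row_eq_zero l
        intro a
        simp [MM, hc0, hr, GG]
    obtain ⟨c, hc⟩ : ∃ c, (t l).2 = c + 1 := Nat.exists_eq_succ_of_ne_zero hc0
    have htl : t l = (r+1, c+1) := by ext <;> simp [hr, hc]
    have hsum : ∀ s : ℕ × ℕ, s.1 + s.2 < (t l).1 + (t l).2 →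
        ∑ b, ((Function.update t l s b).1 + (Function.update t l s b).2) < N := by
      intro s hs
      rw [← hN]
      apply Finset.sum_lt_sum
      · intro b _
        by_cases hb : b = l
        · subst hb; simp; omega
        · simp [hb]
      · exact ⟨l, Finset.mem_univ _, by simpa using hs⟩
    set t1 := Function.update t l (r, c+1) with ht1
    set t2 := Function.update t l (r+1, c) with ht2
    obtain ⟨f1, s1⟩ := ih _ (hsum (r, c+1) (by rw [hr, hc]; simp)) t1 rfl (by
      intro b b' hbb
      have h1 := hW b b' hbb
      by_cases hb : b = l
      · subst hb
        have h2 := hmx b' hbb.ne'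
        simp [ht1, hbb.ne']
        omega
      · by_cases hb' : b' = l
        · subst hb'
          simp [ht1, hb]
          omega
        · simpa [ht1, hb, hb'] using h1)
    obtain ⟨f2, s2⟩ := ih _ (hsum (r+1, c) (by rw [hr, hc]; simp)) t2 rfl (by
      intro b b' hbb
      have h1 := hW b b' hbb
      by_cases hb : b = l
      · subst hb
        simp [ht2, hbb.ne']
        omega
      · by_cases hb' : b' = l
        · subst hb'
          have h2 := hmx b hbb.ne
          simp [ht2, hb]
          omega
        · simpa [ht2, hb, hb'] using h1)
    have hdisj : Disjoint (VV k t1) (VV k t2) := by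
      rw [Set.disjoint_left]
      rintro p ⟨hp, _⟩ ⟨hp', _⟩
      have := RP_unique (hp l) (hp' l)
      simp [ht1, ht2] at this
    have hV : VV k t = consAt l (t l) '' (VV k t1 ∪ VV k t2) := by
      ext p
      constructor
      · rintro ⟨hp, hd⟩
        have h := hp l
        cases h' : p l with
        | nil => rw [h', RP] at h; rw [h] at hl; simp at hl
        | cons v q =>
          rw [h', RP, htl] at h
          simp only [Nat.add_sub_cancel] at h
          obtain ⟨hv, -, -, hq⟩ := h
          have hd' : ∀ b b', b ≠ b' → ∀ w ∈ Function.update p l q b, w ∉ Function.update p l q b' := by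
            have hsub : ∀ b, ∀ w ∈ Function.update p l q b, w ∈ p b := by
              intro b w hw
              by_cases hb : b = l
              · subst hb; rw [h']; simp at hw; simp [hw]
              · simpa [hb] using hw
            intro b b' hbb w hw hw'
            exact hd b b' hbb w (hsub _ _ hw) (hsub _ _ hw')
          refine ⟨Function.update p l q, ?_, ?_⟩
          · rcases hq with hq | hq
            · left
              refine ⟨fun b => ?_, hd'⟩
              by_cases hb : b = l
              · subst hb; simpa [ht1] using hq
              · simpa [ht1, hb] using hp b
            · right
              refine ⟨fun b => ?_, hd'⟩
              by_cases hb : b = l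
              · subst hb; simpa [ht2] using hq
              · simpa [ht2, hb] using hp b
          · funext b
            by_cases hb : b = l
            · subst hb; simp [consAt, h', hv, htl]
            · simp [consAt, hb]
      · rintro ⟨p, hp, rfl⟩
        have hRl : RP ((l : ℕ)+1) (p l) (r, c+1) ∨ RP ((l : ℕ)+1) (p l) (r+1, c) := by
          rcases hp with hp | hp
          · left; simpa [ht1] using hp.1 l
          · right; simpa [ht2] using hp.1 l
        have hRb : ∀ b : Fin k, b ≠ l → RP ((b : ℕ)+1) (p b) (t b) := by
          intro b hb
          rcases hp with hp | hp
          · simpa [ht1, hb] using hp.1 b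
          · simpa [ht2, hb] using hp.1 b
        have hd : ∀ b b', b ≠ b' → ∀ w ∈ p b, w ∉ p b' := by
          rcases hp with hp | hp
          · exact hp.2
          · exact hp.2
        have htn : ∀ b, b ≠ l → t l ∉ p b := by
          intro b hb hm
          have := RP_le (hRb b hb) hm
          exact hmx b hb ⟨this.1, this.2.1⟩
        refine ⟨fun b => ?_, ?_⟩
        · by_cases hb : b = l
          · subst hb
            simp only [consAt, Function.update_self]
            rw [RP, htl]
            simpa using hRl
          · simpa [consAt, hb] using hRb b hb
        · intro b b' hbb w hw
          by_cases hb : b = l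
          · subst hb
            have hb' := hbb.symm
            simp only [consAt, Function.update_self, List.mem_cons] at hw
            simp only [consAt, ne_eq, hb', not_false_eq_true, Function.update_of_ne]
            rcases hw with rfl | hw
            · exact htn b' hb'
            · exact hd _ _ hbb w hw
          · simp only [consAt, ne_eq, hb, not_false_eq_true, Function.update_of_ne] at hw
            by_cases hb' : b' = l
            · subst hb'
              simp only [consAt, Function.update_self, List.mem_cons, not_or]
              refine ⟨?_, hd _ _ hbb w hw⟩
              rintro rfl
              exact htn b hb hw
            · simp only [consAt, ne_eq, hb', not_false_eq_true, Function.update_of_ne]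
              exact hd _ _ hbb w hw
    constructor
    · rw [hV]; exact (f1.union f2).image _
    · rw [hV, finsum_mem_image (consAt_inj l (t l)).injOn]
      simp only [wt_consAt]
      rw [← mul_finsum_mem, finsum_mem_union hdisj f1 f2, s1, s2, ht1, ht2, MM_update, MM_update,
        ← Matrix.det_updateRow_add, ← Matrix.det_updateRow_smul]
      congr 1
      ext b a
      by_cases hb : b = l
      · subst hb; simp [MM, htl, GG]; ring
      · simp [hb]

theorem path_iff (m n a : ℕ) (q : List (ℕ × ℕ)) : ∀ t : ℕ × ℕ, 1 ≤ t.1 → t.1 ≤ m → 1 ≤ t.2 → t.2 ≤ n →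
    ((q.getLast? = some (1, a) ∧ q.head? = some t ∧
      (∀ v ∈ q, 1 ≤ v.1 ∧ v.1 ≤ m ∧ 1 ≤ v.2 ∧ v.2 ≤ n) ∧
      List.IsChain (fun a b => GridStep b a) q) ↔ RP a q t) := by
  induction q with
  | nil =>
    rintro ⟨t1, t2⟩ h1 h2 h3 h4
    simp [RP]
    intro h; simp at h1; omega
  | cons v q ih =>
    rintro ⟨t1, t2⟩ h1 h2 h3 h4
    simp only at h1 h2 h3 h4
    cases q with
    | nil =>
      simp [RP]
      constructor
      · rintro ⟨rfl, h, -⟩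
        simp at h
        simp [h.1, ← h.2]; omega
      · rintro ⟨rfl, -, -, h | h⟩
        · refine ⟨?_, rfl, h1, h2, h3, h4⟩
          ext <;> simp <;> omega
        · omega
    | cons w q =>
      rw [RP]
      constructor
      · rintro ⟨g1, g2, g3, g4⟩
        rw [List.isChain_cons_cons] at g4
        have hw := g3 w (by simp)
        have := (ih w hw.1 hw.2.1 hw.2.2.1 hw.2.2.2).1 ⟨by simpa using g1, by simp, fun u hu => g3 u (List.mem_cons_of_mem _ hu), g4.2⟩
        simp at g2
        subst g2
        refine ⟨rfl, h1, h3, ?_⟩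
        rcases g4.1 with g | g
        · left
          have : w = (t1 - 1, t2) := by
            simp at g; ext <;> simp <;> omega
          rwa [← this]
        · right
          have : w = (t1, t2 - 1) := by
            simp at g; ext <;> simp <;> omega
          rwa [← this]
      · rintro ⟨rfl, -, -, h⟩
        have key : ∃ t', GridStep t' (t1, t2) ∧ t'.1 ≤ m ∧ t'.2 ≤ n ∧ RP a (w :: q) t' := by
          rcases h with h | h
          · exact ⟨_, Or.inl (by simp; omega), by simp; omega, by simpa using h4, h⟩
          · exact ⟨_, Or.inr (by simp; omega), by simpa using h2, by simp; omega, h⟩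
        obtain ⟨t', e1, e2, e3, e4⟩ := key
        have e5 := e4
        rw [RP] at e5
        obtain ⟨rfl, e6, e7, -⟩ := e5
        have := (ih w e6 e2 e7 e3).2 e4
        obtain ⟨g1, g2, g3, g4⟩ := this
        refine ⟨by simpa using g1, rfl, ?_, ?_⟩
        · intro u hu
          rcases List.mem_cons.1 hu with rfl | hu
          · exact ⟨h1, h2, h3, h4⟩
          · exact g3 u hu
        · rw [List.isChain_cons_cons]
          exact ⟨e1, g4⟩

theorem isGridPath_iff (m n a : ℕ) (t : ℕ × ℕ) (h1 : 1 ≤ t.1) (h2 : t.1 ≤ m) (h3 : 1 ≤ t.2)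
    (h4 : t.2 ≤ n) (p : List (ℕ × ℕ)) : IsGridPath m n (1, a) t p ↔ RP a p.reverse t := by
  rw [← path_iff m n a p.reverse t h1 h2 h3 h4]
  unfold IsGridPath
  rw [List.isChain_reverse, List.getLast?_reverse, List.head?_reverse]
  simp only [List.mem_reverse]
  exact Iff.rfl

theorem ybar_eq (m n : ℕ) (x : ℕ → ℕ → ℝ) (i j k s : ℕ) (hi : 1 ≤ i) (him : i ≤ m) (hjn : j ≤ n)
    (hs : j + 1 = s + k) (hs1 : 1 ≤ s) :
    ybar m n x i j k = Matrix.det (Matrix.of fun b a : Fin k => GG x (a + 1) i (s + b)) := by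
  have L := lgv x k _ (fun b : Fin k => (i, s + b)) rfl (by
    intro l l' h
    rw [Fin.lt_def] at h
    simp; omega)
  have hM : MM x k (fun b : Fin k => (i, s + b)) = Matrix.of fun b a : Fin k => GG x (a + 1) i (s + b) := rfl
  rw [← hM, ← L.2, ← finsum_set_coe_eq_finsum_mem]
  unfold ybar
  have hv : ∀ (p : List (List (ℕ × ℕ))) (l : ℕ) (hl : l < k),
      IsGridPath m n (((List.range k).map fun l => (1, l + 1)).getD l (0, 0))
        (((List.range k).map fun l => (i, j - k + (l + 1))).getD l (0, 0)) (p.getD l []) ↔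
      RP (l+1) (p.getD l []).reverse (i, s + l) := by
    intro p l hl
    rw [← isGridPath_iff m n (l+1) (i, s+l) hi him (by simp; omega) (by simp; omega)]
    have : j - k + (l + 1) = s + l := by omega
    simp [List.getD, hl, this]
  have hlenT : ∀ T : NCTuple m n ((List.range k).map fun l => (1, l + 1))
      ((List.range k).map fun l => (i, j - k + (l + 1))), T.path.length = k := by
    intro T; simpa using T.hlen
  refine finsum_eq_of_bijective (fun T => ⟨fun l : Fin k => (T.path.getD l []).reverse, ?_, ?_⟩) ⟨?_, ?_⟩ ?_
  · intro l
    exact (hv _ _ l.2).1 (T.valid l (by rw [hlenT]; exact l.2))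
  · intro l l' hll v hv hv'
    rw [List.mem_reverse] at hv hv'
    exact T.disj l l' (by rw [hlenT]; exact l.2) (by rw [hlenT]; exact l'.2) (by rwa [ne_eq, ← Fin.ext_iff]) v hv hv'
  · intro T T' h
    have h := congrArg Subtype.val h
    have hp : T.path = T'.path := by
      apply List.ext_getElem
      · rw [hlenT, hlenT]
      · intro l h1 h2
        have := congrFun h ⟨l, by rw [hlenT] at h1; exact h1⟩
        simp only [List.reverse_inj] at this
        simpa [List.getD, h1, h2] using this
    cases T; cases T'; simp only at hp; subst hp; rfl
  · rintro ⟨p, hp, hd⟩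
    have hg : ∀ l (hl : l < k), (List.ofFn fun l => (p l).reverse).getD l [] = (p ⟨l, hl⟩).reverse := by
      intro l hl
      simp [List.getD, hl]
    refine ⟨⟨List.ofFn fun l => (p l).reverse, by simp, by simp, ?_, ?_⟩, ?_⟩
    · intro l hl
      have hl : l < k := by simpa using hl
      rw [hv _ l hl, hg l hl, List.reverse_reverse]
      exact hp ⟨l, hl⟩
    · intro l l' hl hl' hll v
      have hl : l < k := by simpa using hl
      have hl' : l' < k := by simpa using hl'
      rw [hg l hl, hg l' hl', List.mem_reverse, List.mem_reverse]
      exact hd _ _ (by simpa using hll) v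
    · apply Subtype.ext
      funext l
      change ((List.ofFn fun l => (p l).reverse).getD l []).reverse = p l
      rw [hg l l.2, List.reverse_reverse]
  · intro T
    have hp : T.path = List.ofFn (fun l : Fin k => T.path.getD l []) := by
      apply List.ext_getElem
      · rw [hlenT]; simp
      · intro l h1 h2
        simp [List.getD, h1]
    unfold wt
    conv_lhs => rw [hp]
    rw [List.map_ofFn, List.prod_ofFn]
    apply Finset.prod_congr rfl
    intro l _
    simp only [Function.comp]
    rw [List.map_reverse]
    exact (List.reverse_perm _).prod_eq.symm

/-- the minors -/
noncomputable def UU (x : ℕ → ℕ → ℝ) (i s k : ℕ) : ℝ :=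
  Matrix.det (Matrix.of fun b a : Fin k => GG x (a + 1) i (s + b))

theorem UU_reduce (x : ℕ → ℕ → ℝ) (r s q : ℕ) :
    UU x (r+1) s (q+1) = (∏ b : Fin q, x (r+1) (s+1+b)) *
      Matrix.det (Matrix.of (Fin.cons (fun a : Fin (q+1) => GG x (a+1) (r+1) s)
        (fun (b : Fin q) (a : Fin (q+1)) => GG x (a+1) r (s+1+b)) : Fin (q+1) → Fin (q+1) → ℝ)) := by
  have h := Matrix.det_mul_column (Fin.cons 1 (fun b : Fin q => x (r+1) (s+1+b)))
    (Matrix.of (Fin.cons (fun a : Fin (q+1) => GG x (a+1) (r+1) s)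
        (fun (b : Fin q) (a : Fin (q+1)) => GG x (a+1) r (s+1+b)) : Fin (q+1) → Fin (q+1) → ℝ))
  rw [Fin.prod_univ_succ] at h
  simp only [Fin.cons_zero, Fin.cons_succ, one_mul] at h
  rw [← h]
  unfold UU
  apply Matrix.det_eq_of_forall_row_eq_smul_add_pred (fun b : Fin q => x (r+1) (s+1+b))
  · intro j; simp
  · intro b a
    have e : s + (b.succ : ℕ) = (s + b) + 1 := by simp; omega
    have e' : s + 1 + (b : ℕ) = s + b + 1 := by omega
    simp only [Matrix.of_apply, e, GG, Fin.cons_succ, e', Fin.val_castSucc]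
    ring

theorem det_cons_change (q : ℕ) (a b c : Fin (q+2) → ℝ) (y : ℝ) (h : a = y • (b + c))
    (W : Fin q → Fin (q+2) → ℝ) :
    Matrix.det (Matrix.of (Fin.cons a (Fin.cons b W) : Fin (q+2) → Fin (q+2) → ℝ)) =
    y * Matrix.det (Matrix.of (Fin.cons c (Fin.cons b W) : Fin (q+2) → Fin (q+2) → ℝ)) := by
  have hu : ∀ p, Matrix.of (Fin.cons p (Fin.cons b W) : Fin (q+2) → Fin (q+2) → ℝ) =
      Matrix.updateRow (Matrix.of (Fin.cons 0 (Fin.cons b W) : Fin (q+2) → Fin (q+2) → ℝ)) 0 p :=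
    fun p => congrArg (fun M => (Matrix.of M : Matrix (Fin (q+2)) (Fin (q+2)) ℝ))
      (Fin.update_cons_zero (α := fun _ => Fin (q+2) → ℝ) 0 (Fin.cons b W) p).symm
  rw [h, hu, Matrix.det_updateRow_smul, Matrix.det_updateRow_add, ← hu, ← hu]
  rw [Matrix.det_zero_of_row_eq (i := 0) (j := 1) (by simp) (by rfl), zero_add]

theorem UU_main (x : ℕ → ℕ → ℝ) (r s q : ℕ) :
    UU x (r+1) (s+1) (q+2) * UU x r (s+1) (q+1) =
      x (r+1) (s+1+q+1) * (UU x r (s+1) (q+2) * UU x (r+1) (s+1) (q+1) +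
        UU x r (s+2) (q+1) * UU x (r+1) s (q+2)) := by
  have P := pluck q (fun a => GG x (a+1) (r+1) (s+1)) (fun a => GG x (a+1) r (s+1))
    (fun a => GG x (a+1) r (s+2+q)) (fun b a => GG x (a+1) r (s+2+b))
  rw [UU_reduce x r (s+1) (q+1), UU_reduce x r (s+1) q, UU_reduce x r s (q+1)]
  have sn : (Fin.snoc (fun (b : Fin q) (a : Fin (q+2)) => GG x (a+1) r (s+2+b))
      (fun a : Fin (q+2) => GG x (a+1) r (s+2+q)) : Fin (q+1) → Fin (q+2) → ℝ) =
      fun (b : Fin (q+1)) (a : Fin (q+2)) => GG x (a+1) r (s+2+b) := by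
    funext b
    refine Fin.lastCases ?_ (fun b => ?_) b <;> simp
  have cn : ∀ N, (Fin.cons (fun a : Fin N => GG x (a+1) r (s+1))
      (fun (b : Fin q) (a : Fin N) => GG x (a+1) r (s+2+b)) : Fin (q+1) → Fin N → ℝ) =
      fun (b : Fin (q+1)) (a : Fin N) => GG x (a+1) r (s+1+b) := by
    intro N
    funext b a
    refine Fin.cases ?_ (fun b => ?_) b
    · simp
    · simp; congr 1; omega
  have cn2 : (Fin.cons (fun a : Fin (q+2) => GG x (a+1) r (s+1))
      (fun (b : Fin (q+1)) (a : Fin (q+2)) => GG x (a+1) r (s+2+b)) : Fin (q+2) → Fin (q+2) → ℝ) =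
      fun (b : Fin (q+2)) (a : Fin (q+2)) => GG x (a+1) r (s+1+b) := by
    funext b a
    refine Fin.cases ?_ (fun b => ?_) b
    · simp
    · simp; congr 1; omega
  have tr : (Matrix.of fun i j : Fin (q+1) => (Fin.cons (fun a : Fin (q+2) => GG x (a+1) (r+1) (s+1))
      (fun (b : Fin q) (a : Fin (q+2)) => GG x (a+1) r (s+2+b)) : Fin (q+1) → Fin (q+2) → ℝ) i j.castSucc) =
      Matrix.of (Fin.cons (fun a : Fin (q+1) => GG x (a+1) (r+1) (s+1))
        (fun (b : Fin q) (a : Fin (q+1)) => GG x (a+1) r (s+2+b)) : Fin (q+1) → Fin (q+1) → ℝ) := by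
    ext b a
    refine Fin.cases ?_ (fun b => ?_) b <;> simp
  have ch := det_cons_change q (fun a => GG x (a+1) (r+1) (s+1)) (fun a => GG x (a+1) r (s+1))
    (fun a => GG x (a+1) (r+1) s) (x (r+1) (s+1)) (by funext a; simp [GG]) (fun b a => GG x (a+1) r (s+2+b))
  rw [ch, sn, cn, cn2, tr] at P
  have p1 : ∏ b : Fin (q+1), x (r+1) (s+1+1+b) = (∏ b : Fin q, x (r+1) (s+2+b)) * x (r+1) (s+1+q+1) := by
    rw [Fin.prod_univ_castSucc]
    simp
    left; congr 1; omega
  have p2 : ∏ b : Fin (q+1), x (r+1) (s+1+b) = x (r+1) (s+1) * ∏ b : Fin q, x (r+1) (s+2+b) := by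
    rw [Fin.prod_univ_succ]
    simp
    left
    apply Finset.prod_congr rfl
    intro b _
    congr 1; omega
  rw [p1, p2]
  unfold UU
  have P' := congrArg (fun z => (∏ b : Fin q, x (r+1) (s+2+b)) * x (r+1) (s+1+q+1) * z) P
  simp only [Fin.val_castSucc] at P'
  linear_combination P'

/-- `ȳ_{i,j,k} ȳ_{i-1,j-1,k-1} = x_{ij}(ȳ_{i-1,j,k} ȳ_{i,j-1,k-1} + ȳ_{i-1,j,k-1} ȳ_{i,j-1,k})`. -/
theorem stmt_8 (m n : ℕ) (x : ℕ → ℕ → ℝ) (hx : ∀ i j, 0 < x i j)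
    (i j k : ℕ) (hi : 2 ≤ i) (him : i ≤ m) (hj : 2 ≤ j) (hjn : j ≤ n)
    (hk : 1 ≤ k) (hk' : k ≤ min i j - 1) :
    ybar m n x i j k * ybar m n x (i - 1) (j - 1) (k - 1) =
      x i j * (ybar m n x (i - 1) j k * ybar m n x i (j - 1) (k - 1) +
        ybar m n x (i - 1) j (k - 1) * ybar m n x i (j - 1) k) := by

  have key : ∀ i j k s, 1 ≤ i → i ≤ m → j ≤ n → j + 1 = s + k → 1 ≤ s →
      ybar m n x i j k = UU x i s k := fun i j k s h1 h2 h3 h4 h5 => ybar_eq m n x i j k s h1 h2 h3 h4 h5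
  obtain ⟨r, rfl⟩ : ∃ r, i = r + 1 := ⟨i - 1, by omega⟩
  obtain ⟨s, rfl⟩ : ∃ s, j = s + k := ⟨j - k, by omega⟩
  have hs : 1 ≤ s := by omega
  obtain ⟨q, rfl⟩ : ∃ q, k = q + 1 := ⟨k - 1, by omega⟩
  simp only [Nat.add_sub_cancel]
  rw [key (r+1) (s+(q+1)) (q+1) (s+1) (by omega) (by omega) (by omega) (by omega) (by omega),
    key r (s+(q+1)-1) q (s+1) (by omega) (by omega) (by omega) (by omega) (by omega),
    key r (s+(q+1)) (q+1) (s+1) (by omega) (by omega) (by omega) (by omega) (by omega),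
    key (r+1) (s+(q+1)-1) q (s+1) (by omega) (by omega) (by omega) (by omega) (by omega),
    key r (s+(q+1)) q (s+2) (by omega) (by omega) (by omega) (by omega) (by omega),
    key (r+1) (s+(q+1)-1) (q+1) s (by omega) (by omega) (by omega) (by omega) (by omega)]
  cases q with
  | zero => simp [UU, GG]
  | succ q =>
    have := UU_main x r s q
    have e : s + (q + 1 + 1) = s + 1 + q + 1 := by omega
    rw [e]
    exact this
end

section
/- Let λ = (λ_1 ≥ … ≥ λ_k ≥ 0) be a partition, let 1 ≤ a ≤ b be integers and c ∈ ℤ. Then the sum, over all k-tuples (π_1,…,π_k) of pairwise vertex-disjoint directed paths in ℤ² with π_l going from (λ_{k+1−l}+l+c, b) to (l+c, a), of the product of the edge weights of all the paths, equals the Schur polynomial s^{[a,b]}_λ (as polynomials in x_a,…,x_b). -/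
/-- A semistandard Young tableau of shape `(lam 0, lam 1, …, lam (k-1))` (so `lam i` is the
length of the `(i+1)`-st row), with entries in `{a, a+1, …, b}`: rows weakly increase,
columns strictly increase.  Entries outside the shape are `0`. -/
structure SSYT (k : ℕ) (lam : ℕ → ℤ) (a b : ℕ) where
  entry : ℕ → ℕ → ℕ
  zero_outside : ∀ i j : ℕ, ¬(i < k ∧ (j : ℤ) < lam i) → entry i j = 0
  lower : ∀ i j : ℕ, i < k → (j : ℤ) < lam i → a ≤ entry i j
  upper : ∀ i j : ℕ, i < k → (j : ℤ) < lam i → entry i j ≤ b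
  row_weak : ∀ i j₁ j₂ : ℕ, i < k → j₁ ≤ j₂ → (j₂ : ℤ) < lam i → entry i j₁ ≤ entry i j₂
  col_strict : ∀ i₁ i₂ j : ℕ, i₁ < i₂ → i₂ < k → (j : ℤ) < lam i₂ → entry i₁ j < entry i₂ j

/-- The monomial `Π_i x_i^{m(i,T)}` of a tableau: the product of `x_{T(c)}` over the
cells `c` of the shape. -/
noncomputable def SSYT.weight {k : ℕ} {lam : ℕ → ℤ} {a b : ℕ} (T : SSYT k lam a b) :
    MvPolynomial ℕ ℤ :=
  ∏ i ∈ Finset.range k, ∏ j ∈ Finset.range (lam i).toNat, MvPolynomial.X (T.entry i j)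

/-- `(lam 0, …, lam (k-1))` is a partition: weakly decreasing with nonnegative entries. -/
def IsPartitionSeq (k : ℕ) (lam : ℕ → ℤ) : Prop :=
  (∀ i, i + 1 < k → lam (i + 1) ≤ lam i) ∧ (∀ i, i < k → 0 ≤ lam i)

/-- The Schur polynomial `s^{[a,b]}_lam = Σ_T Π_i x_i^{m(i,T)}`, the sum running over all
semistandard Young tableaux of shape `lam` with entries in `{a,…,b}`; by convention it is
`0` if `lam` is not a partition. -/
noncomputable def schur (k : ℕ) (lam : ℕ → ℤ) (a b : ℕ) : MvPolynomial ℕ ℤ :=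
  letI := Classical.dec (IsPartitionSeq k lam)
  if IsPartitionSeq k lam then ∑ᶠ T : SSYT k lam a b, T.weight else 0

/-- One step of a directed path in `ℤ²`: from `(i,j)` to `(i-1,j)` or `(i,j-1)`. -/
def ZStep (u v : ℤ × ℤ) : Prop := v = (u.1 - 1, u.2) ∨ v = (u.1, u.2 - 1)

/-- `p` is a directed path in `ℤ²` from `src` to `tgt`. -/
def IsZPath (src tgt : ℤ × ℤ) (p : List (ℤ × ℤ)) : Prop :=
  p.head? = some src ∧ p.getLast? = some tgt ∧ List.Chain' ZStep p

/-- A tuple of pairwise vertex-disjoint directed paths in `ℤ²`, the `l`-th one going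
from the `l`-th entry of `src` to the `l`-th entry of `tgt`. -/
structure ZNCTuple (src tgt : List (ℤ × ℤ)) where
  path : List (List (ℤ × ℤ))
  hlen : path.length = src.length
  hlen' : path.length = tgt.length
  valid : ∀ l, l < path.length →
    IsZPath (src.getD l (0, 0)) (tgt.getD l (0, 0)) (path.getD l [])
  disj : ∀ l l', l < path.length → l' < path.length → l ≠ l' →
    ∀ v ∈ path.getD l [], v ∉ path.getD l' []

/-- The weight of a path in `ℤ²`: horizontal edges `(i,j) → (i-1,j)` have weight `x_j`,
vertical edges have weight `1`. -/
noncomputable def zPathWeight (p : List (ℤ × ℤ)) : MvPolynomial ℕ ℤ :=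
  ((p.zip p.tail).map fun e =>
    if e.2.1 = e.1.1 - 1 then MvPolynomial.X e.1.2.toNat else 1).prod

/-- `LRep d a h n y p`: `p` is the path from `(d+n, y)` to `(d, a)` whose horizontal edge
`(d+j+1, ·) → (d+j, ·)` is at height `h j`. -/
inductive LRep (d : ℤ) (a : ℕ) (h : ℕ → ℕ) : ℕ → ℕ → List (ℤ × ℤ) → Prop
  | nil : LRep d a h 0 a [(d, (a : ℤ))]
  | down {n y : ℕ} {p : List (ℤ × ℤ)} (hp : LRep d a h n y p) :
      LRep d a h n (y + 1) ((d + n, (y : ℤ) + 1) :: p)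
  | left {n y : ℕ} {p : List (ℤ × ℤ)} (hy : h n = y) (hp : LRep d a h n y p) :
      LRep d a h (n + 1) y ((d + n + 1, (y : ℤ)) :: p)

theorem LRep.head {d : ℤ} {a : ℕ} {h : ℕ → ℕ} {n y : ℕ} {p : List (ℤ × ℤ)}
    (H : LRep d a h n y p) : ∃ q, p = (d + n, (y : ℤ)) :: q := by
  cases H with
  | nil => exact ⟨[], by simp⟩
  | down hp => exact ⟨_, by push_cast; rfl⟩
  | left hy hp => exact ⟨_, by push_cast; rw [add_assoc]⟩

theorem LRep.bounds {d : ℤ} {a : ℕ} {h : ℕ → ℕ} {n y : ℕ} {p : List (ℤ × ℤ)}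
    (H : LRep d a h n y p) : a ≤ y ∧ (∀ j, j < n → a ≤ h j ∧ h j ≤ y) ∧
      (∀ j₁ j₂, j₁ ≤ j₂ → j₂ < n → h j₁ ≤ h j₂) := by
  induction H with
  | nil => exact ⟨le_rfl, by intro j hj; omega, by intro j₁ j₂ _ hj; omega⟩
  | down hp ih =>
    obtain ⟨h1, h2, h3⟩ := ih
    exact ⟨by omega, fun j hj => by have := h2 j hj; omega, h3⟩
  | @left n y p hy hp ih =>
    obtain ⟨h1, h2, h3⟩ := ih
    refine ⟨h1, fun j hj => ?_, fun j₁ j₂ h12 hj => ?_⟩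
    · rcases Nat.lt_succ_iff_lt_or_eq.mp hj with hj | rfl
      · exact h2 j hj
      · omega
    · rcases Nat.lt_succ_iff_lt_or_eq.mp hj with hj | rfl
      · exact h3 _ _ h12 hj
      · rcases Nat.lt_or_eq_of_le h12 with h12 | rfl
        · have := h2 _ h12; omega
        · exact le_rfl

theorem LRep.isZPath {d : ℤ} {a : ℕ} {h : ℕ → ℕ} {n y : ℕ} {p : List (ℤ × ℤ)}
    (H : LRep d a h n y p) : IsZPath (d + n, (y : ℤ)) (d, (a : ℤ)) p := by
  induction H with
  | nil => simp [IsZPath, List.Chain']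
  | @down n y p hp ih =>
    obtain ⟨q, rfl⟩ := hp.head
    obtain ⟨h1, h2, h3⟩ := ih
    refine ⟨by simp, by simpa [List.getLast?_cons_cons] using h2, ?_⟩
    refine List.IsChain.cons_cons ?_ h3
    right; simp
  | @left n y p hy hp ih =>
    obtain ⟨q, rfl⟩ := hp.head
    obtain ⟨h1, h2, h3⟩ := ih
    refine ⟨by simp [add_assoc], by simpa [List.getLast?_cons_cons] using h2, ?_⟩
    refine List.IsChain.cons_cons ?_ h3
    left; simp

theorem zPathWeight_cons_cons (u v : ℤ × ℤ) (p : List (ℤ × ℤ)) :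
    zPathWeight (u :: v :: p) =
      (if v.1 = u.1 - 1 then MvPolynomial.X u.2.toNat else 1) * zPathWeight (v :: p) := by
  simp [zPathWeight]

theorem LRep.weight {d : ℤ} {a : ℕ} {h : ℕ → ℕ} {n y : ℕ} {p : List (ℤ × ℤ)}
    (H : LRep d a h n y p) :
    zPathWeight p = ∏ j ∈ Finset.range n, MvPolynomial.X (h j) := by
  induction H with
  | nil => simp [zPathWeight]
  | @down n y p hp ih =>
    obtain ⟨q, rfl⟩ := hp.head
    rw [zPathWeight_cons_cons, ih, if_neg (by simp only; omega), one_mul]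
  | @left n y p hy hp ih =>
    obtain ⟨q, rfl⟩ := hp.head
    rw [zPathWeight_cons_cons, ih, if_pos (by simp), Finset.prod_range_succ, mul_comm, hy]
    simp

theorem LRep.congr {d : ℤ} {a : ℕ} {h h' : ℕ → ℕ} {n y : ℕ} {p : List (ℤ × ℤ)}
    (H : LRep d a h n y p) (hh : ∀ j, j < n → h j = h' j) : LRep d a h' n y p := by
  induction H with
  | nil => exact .nil
  | down hp ih => exact .down (ih hh)
  | left hy hp ih => exact .left (by rw [← hh _ (Nat.lt_succ_self _)]; exact hy)
                      (ih fun j hj => hh j (by omega))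

theorem LRep.path_unique {d : ℤ} {a : ℕ} {h : ℕ → ℕ} {n y : ℕ} {p p' : List (ℤ × ℤ)}
    (H : LRep d a h n y p) (H' : LRep d a h n y p') : p = p' := by
  induction H generalizing p' with
  | nil =>
    cases H' with
    | nil => rfl
    | down hp => have := hp.bounds.1; omega
  | @down n y p hp ih =>
    cases H' with
    | nil => have := hp.bounds.1; omega
    | down hp' => rw [ih hp']
    | left hy' hp' => have := (hp.bounds.2.1 _ (Nat.lt_succ_self _)).2; omega
  | @left n y p hy hp ih =>
    cases H' with
    | down hp' => have := (hp'.bounds.2.1 _ (Nat.lt_succ_self _)).2; omega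
    | left hy' hp' => rw [ih hp']

theorem LRep.height_unique {d : ℤ} {a : ℕ} {h h' : ℕ → ℕ} {n y : ℕ} {p : List (ℤ × ℤ)}
    (H : LRep d a h n y p) (H' : LRep d a h' n y p) : ∀ j, j < n → h j = h' j := by
  induction H with
  | nil => intro j hj; omega
  | @down n y p hp ih =>
    obtain ⟨q, rfl⟩ := hp.head
    generalize hp0 : (d + (n : ℤ), (y : ℤ) + 1) :: (d + (n : ℤ), (y : ℤ)) :: q = p0 at H'
    generalize hy0 : y + 1 = y0 at H'
    cases H' with
    | nil => simp at hp0
    | @down n y p hp' =>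
      simp only [List.cons.injEq] at hp0
      obtain rfl : _ = y := Nat.succ.inj hy0
      rw [← hp0.2] at hp'
      exact ih hp'
    | @left n y p hy' hp' =>
      obtain ⟨q', rfl⟩ := hp'.head
      simp only [List.cons.injEq, Prod.mk.injEq] at hp0
      push_cast at hp0
      omega
  | @left n y p hy hp ih =>
    obtain ⟨q, rfl⟩ := hp.head
    generalize hp0 : (d + (n : ℤ) + 1, (y : ℤ)) :: (d + (n : ℤ), (y : ℤ)) :: q = p0 at H'
    generalize hn0 : n + 1 = n0 at H'
    cases H' with
    | nil => simp at hp0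
    | @down n' y p hp' =>
      obtain ⟨q', rfl⟩ := hp'.head
      simp only [List.cons.injEq, Prod.mk.injEq] at hp0
      push_cast at hp0
      omega
    | @left n' y p hy' hp' =>
      simp only [List.cons.injEq] at hp0
      obtain rfl : n = n' := Nat.succ.inj hn0
      rw [← hp0.2] at hp'
      intro j hj
      rcases Nat.lt_succ_iff_lt_or_eq.mp hj with hj | rfl
      · exact ih hp' j hj
      · omega

theorem LRep.exists_path (d : ℤ) (a : ℕ) (h : ℕ → ℕ) (n y : ℕ) (hay : a ≤ y)
    (hb : ∀ j, j < n → a ≤ h j ∧ h j ≤ y)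
    (hm : ∀ j₁ j₂, j₁ ≤ j₂ → j₂ < n → h j₁ ≤ h j₂) : ∃ p, LRep d a h n y p := by
  induction n generalizing y with
  | zero =>
    induction y, hay using Nat.le_induction with
    | base => exact ⟨_, .nil⟩
    | succ y hy ih =>
      obtain ⟨p, hp⟩ := ih (by intro j hj; omega)
      exact ⟨_, .down hp⟩
  | succ n ihn =>
    have hn := hb n (Nat.lt_succ_self n)
    have key : ∃ p, LRep d a h (n + 1) (h n) p := by
      obtain ⟨p, hp⟩ := ihn (h n) hn.1
        (fun j hj => ⟨(hb j (by omega)).1, hm _ _ (by omega) (by omega)⟩)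
        (fun j₁ j₂ h1 h2 => hm _ _ h1 (by omega))
      exact ⟨_, .left rfl hp⟩
    have hle : h n ≤ y := hn.2
    clear hb hn hay
    induction y, hle using Nat.le_induction with
    | base => exact key
    | succ y hy ih =>
      obtain ⟨p, hp⟩ := ih
      exact ⟨_, .down hp⟩

theorem IsZPath.le {s t : ℤ × ℤ} {p : List (ℤ × ℤ)} (H : IsZPath s t p) :
    t.1 ≤ s.1 ∧ t.2 ≤ s.2 := by
  induction p generalizing s with
  | nil => simp [IsZPath] at H
  | cons u p ih =>
    obtain ⟨h1, h2, h3⟩ := H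
    simp only [List.head?_cons, Option.some.injEq] at h1
    subst h1
    cases p with
    | nil =>
      simp only [List.getLast?_singleton, Option.some.injEq] at h2
      subst h2; exact ⟨le_rfl, le_rfl⟩
    | cons v p =>
      have h3' := List.isChain_cons_cons.mp h3
      have := ih (s := v) ⟨rfl, by simpa [List.getLast?_cons_cons] using h2, h3'.2⟩
      rcases h3'.1 with rfl | rfl <;> simp at this <;> omega

theorem LRep.exists_height (d : ℤ) (a : ℕ) (p : List (ℤ × ℤ)) (n y : ℕ)
    (H : IsZPath (d + n, (y : ℤ)) (d, (a : ℤ)) p) : ∃ h, LRep d a h n y p := by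
  induction p generalizing n y with
  | nil => simp [IsZPath] at H
  | cons u p ih =>
    obtain ⟨h1, h2, h3⟩ := H
    simp only [List.head?_cons, Option.some.injEq] at h1
    subst h1
    cases p with
    | nil =>
      simp only [List.getLast?_singleton, Option.some.injEq, Prod.mk.injEq] at h2
      obtain rfl : n = 0 := by omega
      obtain rfl : y = a := by omega
      exact ⟨fun _ => 0, by simpa using LRep.nil⟩
    | cons v p =>
      have h3' := List.isChain_cons_cons.mp h3
      have hv : IsZPath v (d, (a : ℤ)) (v :: p) :=
        ⟨rfl, by simpa [List.getLast?_cons_cons] using h2, h3'.2⟩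
      have hle := hv.le
      rcases h3'.1 with rfl | rfl
      · simp only at hle
        obtain ⟨m, rfl⟩ : ∃ m, n = m + 1 := ⟨n - 1, by omega⟩
        have e : d + ((m + 1 : ℕ) : ℤ) - 1 = d + m := by push_cast; ring
        have e' : d + ((m + 1 : ℕ) : ℤ) = d + m + 1 := by push_cast; ring
        simp only [e] at hv ih ⊢
        obtain ⟨h, hh⟩ := ih m y hv
        refine ⟨Function.update h m y, ?_⟩
        rw [e']
        refine .left (by simp) (hh.congr fun j hj => ?_)
        rw [Function.update_of_ne (by omega)]
      · simp only at hle
        obtain ⟨m, rfl⟩ : ∃ m, y = m + 1 := ⟨y - 1, by omega⟩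
        have e : ((m + 1 : ℕ) : ℤ) - 1 = m := by push_cast; ring
        have e' : ((m + 1 : ℕ) : ℤ) = m + 1 := by push_cast; ring
        simp only [e] at hv ih ⊢
        obtain ⟨h, hh⟩ := ih n m hv
        rw [e']
        exact ⟨h, .down hh⟩

theorem LRep.mem_iff {d : ℤ} {a : ℕ} {h : ℕ → ℕ} {n y : ℕ} {p : List (ℤ × ℤ)}
    (H : LRep d a h n y p) (v : ℤ × ℤ) : v ∈ p ↔ ∃ j, j ≤ n ∧ v.1 = d + j ∧
      (((if j = 0 then a else h (j - 1) : ℕ) : ℤ) ≤ v.2) ∧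
      (v.2 ≤ ((if j = n then y else h j : ℕ) : ℤ)) := by
  obtain ⟨v1, v2⟩ := v
  induction H with
  | nil =>
    simp only [List.mem_singleton, Prod.mk.injEq]
    constructor
    · rintro ⟨rfl, rfl⟩; exact ⟨0, by simp⟩
    · rintro ⟨j, hj, h1, h2, h3⟩
      obtain rfl : j = 0 := by omega
      simp at h1 h2 h3; omega
  | @down n y p hp ih =>
    have hb := hp.bounds
    rw [List.mem_cons, ih]
    simp only [Prod.mk.injEq]
    constructor
    · rintro (⟨rfl, rfl⟩ | ⟨j, hj, h1, h2, h3⟩)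
      · refine ⟨n, le_rfl, rfl, ?_, by simp⟩
        split_ifs with h0
        · omega
        · have := hb.2.1 (n - 1) (by omega); omega
      · refine ⟨j, hj, h1, h2, ?_⟩
        split_ifs at h3 ⊢ <;> omega
    · rintro ⟨j, hj, h1, h2, h3⟩
      by_cases hjn : j = n
      · subst hjn
        by_cases hv : v2 = y + 1
        · exact Or.inl ⟨h1, hv⟩
        · refine Or.inr ⟨j, hj, h1, h2, ?_⟩
          simp at h3 ⊢; omega
      · refine Or.inr ⟨j, hj, h1, h2, ?_⟩
        simpa [hjn] using h3
  | @left n y p hy hp ih =>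
    have hb := hp.bounds
    rw [List.mem_cons, ih]
    simp only [Prod.mk.injEq]
    constructor
    · rintro (⟨rfl, rfl⟩ | ⟨j, hj, h1, h2, h3⟩)
      · exact ⟨n + 1, le_rfl, by push_cast; ring, by simp [hy], by simp⟩
      · refine ⟨j, by omega, h1, h2, ?_⟩
        rw [if_neg (by omega)]
        split_ifs at h3 with hjn
        · subst hjn; omega
        · exact h3
    · rintro ⟨j, hj, h1, h2, h3⟩
      by_cases hjn : j = n + 1
      · subst hjn
        simp at h1 h2 h3
        left; omega
      · refine Or.inr ⟨j, by omega, h1, h2, ?_⟩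
        rw [if_neg hjn] at h3
        split_ifs with hj'
        · subst hj'; omega
        · exact h3

theorem lam_anti {k : ℕ} {lam : ℕ → ℤ} (hdec : ∀ i, i + 1 < k → lam (i + 1) ≤ lam i)
    {i₁ i₂ : ℕ} (h : i₁ ≤ i₂) (h2 : i₂ < k) : lam i₂ ≤ lam i₁ := by
  induction i₂, h using Nat.le_induction with
  | base => exact le_rfl
  | succ n hn ih => exact (hdec n h2).trans (ih (by omega))

/-- Two rows of a tableau give disjoint paths. -/
theorem disj_of_col {d₁ d₂ : ℤ} {a b n₁ n₂ : ℕ} {h₁ h₂ : ℕ → ℕ} {p₁ p₂ : List (ℤ × ℤ)}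
    (H₁ : LRep d₁ a h₁ n₁ b p₁) (H₂ : LRep d₂ a h₂ n₂ b p₂) (hd : d₂ < d₁) (hn : n₂ ≤ n₁)
    (hc : ∀ j, j < n₂ → h₁ j < h₂ j) (v : ℤ × ℤ) (hv₁ : v ∈ p₁) (hv₂ : v ∈ p₂) : False := by
  obtain ⟨j₁, a1, a2, a3, a4⟩ := (H₁.mem_iff v).mp hv₁
  obtain ⟨j₂, b1, b2, b3, b4⟩ := (H₂.mem_iff v).mp hv₂
  have hlt : j₁ < j₂ := by omega
  rw [if_neg (by omega)] at a4 b3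
  have := hc j₁ (by omega)
  have := H₂.bounds.2.2 j₁ (j₂ - 1) (by omega) (by omega)
  omega

/-- Disjoint adjacent paths give a strict inequality. -/
theorem col_of_disj {d : ℤ} {a b n₁ n₂ : ℕ} {h₁ h₂ : ℕ → ℕ} {p₁ p₂ : List (ℤ × ℤ)}
    (H₁ : LRep (d + 1) a h₁ n₁ b p₁) (H₂ : LRep d a h₂ n₂ b p₂) (hn : n₂ ≤ n₁)
    (hv : ∀ v, v ∈ p₁ → v ∈ p₂ → False) : ∀ j, j < n₂ → h₁ j < h₂ j := by
  intro j
  induction j with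
  | zero =>
    intro hj
    by_contra hcon
    refine hv (d + 1, (h₂ 0 : ℤ)) ((H₁.mem_iff _).mpr ⟨0, by omega, by simp, ?_, ?_⟩)
      ((H₂.mem_iff _).mpr ⟨1, by omega, by simp, by simp, ?_⟩)
    · have := H₂.bounds.2.1 0 hj; simp; omega
    · rw [if_neg (by omega)]; simp; omega
    · have := H₂.bounds.2.1 0 hj
      split_ifs with h
      · simp; omega
      · have := H₂.bounds.2.2 0 1 (by omega) (by omega); simp; omega
  | succ j ih =>
    intro hj
    have ih' := ih (by omega)
    by_contra hcon
    have hm := H₂.bounds.2.2 j (j + 1) (by omega) (by omega)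
    refine hv (d + 1 + ((j + 1 : ℕ) : ℤ), (h₂ (j + 1) : ℤ))
      ((H₁.mem_iff _).mpr ⟨j + 1, by omega, by simp, ?_, ?_⟩)
      ((H₂.mem_iff _).mpr ⟨j + 2, by omega, by push_cast; ring, by simp, ?_⟩)
    · simp; omega
    · rw [if_neg (by omega)]; simp; omega
    · have := H₂.bounds.2.1 (j + 1) hj
      split_ifs with h
      · simp; omega
      · have := H₂.bounds.2.2 (j + 1) (j + 2) (by omega) (by omega); simp; omega

/-- The tuple of sources. -/
abbrev zsrc (k : ℕ) (lam : ℕ → ℤ) (b : ℕ) (c : ℤ) : List (ℤ × ℤ) :=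
  (List.range k).map fun l => (lam (k - 1 - l) + (l : ℤ) + 1 + c, (b : ℤ))

/-- The tuple of targets. -/
abbrev ztgt (k : ℕ) (a : ℕ) (c : ℤ) : List (ℤ × ℤ) :=
  (List.range k).map fun l => ((l : ℤ) + 1 + c, (a : ℤ))

theorem ztgt_getD {k a : ℕ} {c : ℤ} {l : ℕ} (hl : l < k) :
    (ztgt k a c).getD l (0, 0) = ((l : ℤ) + 1 + c, (a : ℤ)) := by
  have e : ztgt k a c = (List.range k).map fun l : ℕ => ((l : ℤ) + 1 + c, (a : ℤ)) := by
    simp [ztgt, List.map_eq_flatMap, List.flatMap_assoc]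
  rw [e, List.getD_eq_getElem _ _ (by simpa using hl)]
  simp

/-- The correspondence between path tuples and tableaux. -/
def TRel {k : ℕ} {lam : ℕ → ℤ} {a b : ℕ} {c : ℤ}
    (T : ZNCTuple (zsrc k lam b c) (ztgt k a c)) (S : SSYT k lam a b) : Prop :=
  ∀ l, l < k → LRep ((l : ℤ) + 1 + c) a (S.entry (k - 1 - l)) (lam (k - 1 - l)).toNat b
    (T.path.getD l [])

theorem ZNCTuple.ext' {s t : List (ℤ × ℤ)} {T T' : ZNCTuple s t} (h : T.path = T'.path) :
    T = T' := by
  cases T; cases T'; simp only at h; subst h; rfl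

theorem SSYT.ext' {k : ℕ} {lam : ℕ → ℤ} {a b : ℕ} {T T' : SSYT k lam a b}
    (h : T.entry = T'.entry) : T = T' := by
  cases T; cases T'; simp only at h; subst h; rfl

theorem TRel.weight {k : ℕ} {lam : ℕ → ℤ} {a b : ℕ} {c : ℤ}
    {T : ZNCTuple (zsrc k lam b c) (ztgt k a c)} {S : SSYT k lam a b} (H : TRel T S) :
    (T.path.map zPathWeight).prod = S.weight := by
  have hl : T.path.length = k := by rw [T.hlen]; simp
  have e : T.path.map zPathWeight =
      (List.range k).map fun l => zPathWeight (T.path.getD l []) := by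
    apply List.ext_getElem
    · simp [hl]
    · intro i h1 h2
      simp at h1
      simp [h1]
  have e2 : ((List.range k).map fun l => zPathWeight (T.path.getD l [])).prod =
      ∏ l ∈ Finset.range k, zPathWeight (T.path.getD l []) := by
    rw [Finset.prod_range, ← List.prod_ofFn]
    congr 1
    apply List.ext_getElem <;> simp
  rw [e, e2, SSYT.weight, ← Finset.prod_range_reflect (fun i =>
    ∏ j ∈ Finset.range (lam i).toNat, MvPolynomial.X (S.entry i j))]
  refine Finset.prod_congr rfl fun l hl => ?_
  rw [Finset.mem_range] at hl
  exact (H l hl).weight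

theorem TRel.exists_ssyt {k : ℕ} {lam : ℕ → ℤ} {a b : ℕ} {c : ℤ}
    (hdec : ∀ i, i + 1 < k → lam (i + 1) ≤ lam i) (hpos : ∀ i, i < k → 0 ≤ lam i)
    (T : ZNCTuple (zsrc k lam b c) (ztgt k a c)) : ∃ S : SSYT k lam a b, TRel T S := by
  have hl : T.path.length = k := by rw [T.hlen]; simp
  have hex : ∀ i, ∃ h : ℕ → ℕ, i < k → LRep (((k - 1 - i : ℕ) : ℤ) + 1 + c) a h (lam i).toNat b
      (T.path.getD (k - 1 - i) []) := by
    intro i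
    by_cases hi : i < k
    · have hv := T.valid (k - 1 - i) (by omega)
      have hp := hpos i hi
      have e : k - 1 - (k - 1 - i) = i := by omega
      have e1 : (zsrc k lam b c).getD (k - 1 - i) (0, 0) =
          (((k - 1 - i : ℕ) : ℤ) + 1 + c + ((lam i).toNat : ℤ), (b : ℤ)) := by
        rw [List.getD_eq_getElem _ _ (by simp; omega)]
        simp [e, Int.toNat_of_nonneg hp]; ring
      have e2 : (ztgt k a c).getD (k - 1 - i) (0, 0) =
          (((k - 1 - i : ℕ) : ℤ) + 1 + c, (a : ℤ)) := ztgt_getD (by omega)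
      rw [e1, e2] at hv
      obtain ⟨h, hh⟩ := LRep.exists_height _ _ _ _ _ hv
      exact ⟨h, fun _ => hh⟩
    · exact ⟨fun _ => 0, fun h => absurd h hi⟩
  choose h hh using hex
  have hstep : ∀ i j : ℕ, i + 1 < k → (j : ℤ) < lam (i + 1) → h i j < h (i + 1) j := by
    intro i j hi hj
    have H₁ := hh i (by omega)
    have H₂ := hh (i + 1) hi
    have e : ((k - 1 - i : ℕ) : ℤ) + 1 + c = ((k - 1 - (i + 1) : ℕ) : ℤ) + 1 + c + 1 := by omega
    rw [e] at H₁
    refine col_of_disj H₁ H₂ ?_ ?_ j (by omega)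
    · have := hdec i hi; omega
    · intro v hv₁ hv₂
      exact T.disj (k - 1 - i) (k - 1 - (i + 1)) (by omega) (by omega) (by omega) v hv₁ hv₂
  have hcol : ∀ i₁ i₂ j : ℕ, i₁ < i₂ → i₂ < k → (j : ℤ) < lam i₂ → h i₁ j < h i₂ j := by
    intro i₁ i₂ j h12
    induction i₂, h12 using Nat.le_induction with
    | base => exact hstep i₁ j
    | succ n hn ih =>
      intro h2 hj
      exact (ih (by omega) (hj.trans_le (hdec n h2))).trans (hstep n j h2 hj)
  refine ⟨⟨fun i j => if i < k ∧ (j : ℤ) < lam i then h i j else 0, ?_, ?_, ?_, ?_, ?_⟩, ?_⟩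
  · intro i j hij; simp only [if_neg hij]
  · intro i j hi hj
    simp only [if_pos (And.intro hi hj)]
    exact ((hh i hi).bounds.2.1 j (by omega)).1
  · intro i j hi hj
    simp only [if_pos (And.intro hi hj)]
    exact ((hh i hi).bounds.2.1 j (by omega)).2
  · intro i j₁ j₂ hi hj hj2
    have hj1 : (j₁ : ℤ) < lam i := by omega
    simp only [if_pos (And.intro hi hj1), if_pos (And.intro hi hj2)]
    exact (hh i hi).bounds.2.2 j₁ j₂ hj (by omega)
  · intro i₁ i₂ j hi h2 hj
    have h1 : i₁ < k := by omega
    have hj1 : (j : ℤ) < lam i₁ := hj.trans_le (lam_anti hdec hi.le h2)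
    simp only [if_pos (And.intro h1 hj1), if_pos (And.intro h2 hj)]
    exact hcol i₁ i₂ j hi h2 hj
  · intro l hlk
    have hi : k - 1 - l < k := by omega
    have e : k - 1 - (k - 1 - l) = l := by omega
    have H := hh (k - 1 - l) hi
    rw [e] at H
    refine H.congr fun j hj => ?_
    have : (j : ℤ) < lam (k - 1 - l) := by omega
    simp only [if_pos (And.intro hi this)]

theorem TRel.exists_tuple {k : ℕ} {lam : ℕ → ℤ} {a b : ℕ} {c : ℤ} (hab : a ≤ b)
    (hdec : ∀ i, i + 1 < k → lam (i + 1) ≤ lam i) (hpos : ∀ i, i < k → 0 ≤ lam i)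
    (S : SSYT k lam a b) : ∃ T : ZNCTuple (zsrc k lam b c) (ztgt k a c), TRel T S := by
  have hex : ∀ l, ∃ p, l < k → LRep ((l : ℤ) + 1 + c) a (S.entry (k - 1 - l))
      (lam (k - 1 - l)).toNat b p := by
    intro l
    by_cases hlk : l < k
    · have hi : k - 1 - l < k := by omega
      obtain ⟨p, hp⟩ := LRep.exists_path ((l : ℤ) + 1 + c) a (S.entry (k - 1 - l))
        (lam (k - 1 - l)).toNat b hab
        (fun j hj => ⟨S.lower _ _ hi (by omega), S.upper _ _ hi (by omega)⟩)
        (fun j₁ j₂ h1 h2 => S.row_weak _ _ _ hi h1 (by omega))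
      exact ⟨p, fun _ => hp⟩
    · exact ⟨[], fun h => absurd h hlk⟩
  choose p hp using hex
  have hget : ∀ l, l < k → ((List.range k).map p).getD l [] = p l := by
    intro l hlk
    rw [List.getD_eq_getElem _ _ (by simpa using hlk)]
    simp
  have hdisj : ∀ l l', l < k → l' < l → ∀ v, v ∈ p l → v ∈ p l' → False := by
    intro l l' hlk hl' v hv hv'
    have h2 : k - 1 - l' < k := by omega
    refine disj_of_col (hp l hlk) (hp l' (by omega)) (by omega) ?_ ?_ v hv hv'
    · have := lam_anti hdec (show k - 1 - l ≤ k - 1 - l' by omega) h2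
      omega
    · intro j hj
      exact S.col_strict _ _ j (by omega) h2 (by omega)
  refine ⟨⟨(List.range k).map p, by simp, by simp, ?_, ?_⟩, ?_⟩
  · intro l hl
    have hlk : l < k := by simpa using hl
    have e1 : (zsrc k lam b c).getD l (0, 0) =
        ((l : ℤ) + 1 + c + ((lam (k - 1 - l)).toNat : ℤ), (b : ℤ)) := by
      rw [List.getD_eq_getElem _ _ (by simpa using hlk)]
      simp [Int.toNat_of_nonneg (hpos (k - 1 - l) (by omega))]; ring
    have e2 : (ztgt k a c).getD l (0, 0) = ((l : ℤ) + 1 + c, (a : ℤ)) := ztgt_getD hlk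
    rw [e1, e2, hget l hlk]
    exact (hp l hlk).isZPath
  · intro l l' hl hl' hne v hv hv'
    have hlk : l < k := by simpa using hl
    have hlk' : l' < k := by simpa using hl'
    rw [hget l hlk] at hv
    rw [hget l' hlk'] at hv'
    rcases Nat.lt_or_gt_of_ne hne with h | h
    · exact hdisj l' l hlk' h v hv' hv
    · exact hdisj l l' hlk h v hv hv'
  · intro l hlk
    simp only [hget l hlk]
    exact hp l hlk

theorem TRel.ssyt_unique {k : ℕ} {lam : ℕ → ℤ} {a b : ℕ} {c : ℤ}
    {T : ZNCTuple (zsrc k lam b c) (ztgt k a c)} {S S' : SSYT k lam a b}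
    (H : TRel T S) (H' : TRel T S') : S = S' := by
  apply SSYT.ext'
  funext i j
  by_cases hij : i < k ∧ (j : ℤ) < lam i
  · have e : k - 1 - (k - 1 - i) = i := by omega
    have h1 := H (k - 1 - i) (by omega)
    have h2 := H' (k - 1 - i) (by omega)
    rw [e] at h1 h2
    exact h1.height_unique h2 j (by omega)
  · rw [S.zero_outside i j hij, S'.zero_outside i j hij]

theorem TRel.tuple_unique {k : ℕ} {lam : ℕ → ℤ} {a b : ℕ} {c : ℤ}
    {T T' : ZNCTuple (zsrc k lam b c) (ztgt k a c)} {S : SSYT k lam a b}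
    (H : TRel T S) (H' : TRel T' S) : T = T' := by
  apply ZNCTuple.ext'
  have hl : T.path.length = k := by rw [T.hlen]; simp
  have hl' : T'.path.length = k := by rw [T'.hlen]; simp
  apply List.ext_getElem (by omega)
  intro l h1 h2
  have := (H l (by omega)).path_unique (H' l (by omega))
  rwa [List.getD_eq_getElem _ _ h1, List.getD_eq_getElem _ _ h2] at this

/-- the sum over `k`-tuples of pairwise vertex-disjoint paths in `ℤ²`,
with the `l`-th path going from `(λ_{k+1-l} + l + c, b)` to `(l + c, a)`, of the product
of their weights, equals the Schur polynomial `s^{[a,b]}_λ`. -/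
theorem stmt_10 (k : ℕ) (lam : ℕ → ℤ)
    (hdec : ∀ i, i + 1 < k → lam (i + 1) ≤ lam i) (hpos : ∀ i, i < k → 0 ≤ lam i)
    (a b : ℕ) (ha : 1 ≤ a) (hab : a ≤ b) (c : ℤ) :
    (∑ᶠ T : ZNCTuple
        ((List.range k).map fun l => (lam (k - 1 - l) + (l : ℤ) + 1 + c, (b : ℤ)))
        ((List.range k).map fun l => ((l : ℤ) + 1 + c, (a : ℤ))),
      (T.path.map zPathWeight).prod) = schur k lam a b := by

  rw [schur, if_pos ⟨hdec, hpos⟩]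
  choose f hf using fun T : ZNCTuple (zsrc k lam b c) (ztgt k a c) =>
    TRel.exists_ssyt hdec hpos T
  refine finsum_eq_of_bijective f ⟨?_, ?_⟩ fun T => (hf T).weight
  · intro T T' h
    have h1 := hf T
    rw [h] at h1
    exact h1.tuple_unique (hf T')
  · intro S
    obtain ⟨T, hT⟩ := TRel.exists_tuple (c := c) hab hdec hpos S
    exact ⟨T, (hf T).ssyt_unique hT⟩
end
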